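/- For any sets A and B that are not Δ⁰₂ (not computable from the halting problem), A and B do not form a minimal pair for generic computability: there exists C, not generically computable, that is both generically A-computable and generically B-computable. -/

import Mathlib

open Filter

/-- The counting function: number of elements of `A` below `n`, divided by `n`. -/
noncomputable def partialDensity (A : Set ℕ) (n : ℕ) : ℝ := ((A ∩ Set.Iio n).ncard : ℝ) / n

/-- `A ⊆ ℕ` has density `d` if the partial densities tend to `d`. -/
def HasDensity (A : Set ℕ) (d : ℝ) : Prop :=
  Tendsto (partialDensity A) atTop (nhds d)

/-- `A ⊆ ℕ` has density 1. -/
def Density1 (A : Set ℕ) : Prop := HasDensity A 1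

/-- Partial recursive functions relative to an oracle `O : ℕ →. ℕ`
(relativization of `Nat.Partrec`). -/
inductive RecIn (O : ℕ →. ℕ) : (ℕ →. ℕ) → Prop
  | zero : RecIn O (pure 0)
  | succ : RecIn O ↑(Nat.succ)
  | left : RecIn O ↑fun n : ℕ => n.unpair.1
  | right : RecIn O ↑fun n : ℕ => n.unpair.2
  | oracle : RecIn O O
  | pair {f g} : RecIn O f → RecIn O g → RecIn O fun n => Nat.pair <$> f n <*> g n
  | comp {f g} : RecIn O f → RecIn O g → RecIn O fun n => g n >>= f
  | prec {f g} : RecIn O f → RecIn O g → RecIn O (Nat.unpaired fun a n =>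
      n.rec (f a) fun y IH => do let i ← IH; g (Nat.pair a (Nat.pair y i)))
  | rfind {f} : RecIn O f → RecIn O fun a =>
      Nat.rfind fun n => (fun m => m = 0) <$> f (Nat.pair a n)

open Classical in
/-- The characteristic function of a set of naturals, as a (total) partial function. -/
noncomputable def chi (A : Set ℕ) : ℕ →. ℕ :=
  fun n => Part.some (if n ∈ A then 1 else 0)

/-- `A` Turing-computes `B`. -/
def TuringComputes (A B : Set ℕ) : Prop := RecIn (chi A) (chi B)

/-- `A` generically computes `C`: some `{0,1}`-valued partial function, partial recursive
in `A`, has density-1 domain and is correct about membership in `C` wherever defined. -/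
def GenericallyComputes (A C : Set ℕ) : Prop :=
  ∃ φ : ℕ →. ℕ, RecIn (chi A) φ ∧
    Density1 {n | (φ n).Dom} ∧
    (∀ n v, v ∈ φ n → v = 0 ∨ v = 1) ∧
    (∀ n, 1 ∈ φ n → n ∈ C) ∧ (∀ n, 0 ∈ φ n → n ∉ C)

/-- `C` is generically computable (no oracle). -/
def GenericallyComputable (C : Set ℕ) : Prop :=
  ∃ φ : ℕ →. ℕ, Nat.Partrec φ ∧
    Density1 {n | (φ n).Dom} ∧
    (∀ n v, v ∈ φ n → v = 0 ∨ v = 1) ∧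
    (∀ n, 1 ∈ φ n → n ∈ C) ∧ (∀ n, 0 ∈ φ n → n ∉ C)

/-- The halting set `0′`. -/
def haltingSet : Set ℕ :=
  {n : ℕ | ((Denumerable.ofNat Nat.Partrec.Code n).eval n).Dom}

/-- `A` is `Δ⁰₂`: computable from the halting problem. -/
def Delta2 (A : Set ℕ) : Prop := TuringComputes haltingSet A

/-! ### Primitive recursive predicates -/

section Primrec

variable {α : Type*} [Primcodable α]

theorem Primrec.self : Primrec fun a : α => a := Primrec.id

theorem Primrec.proj_fst {β γ : Type*} [Primcodable β] [Primcodable γ] {f : α → β × γ}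
    (hf : Primrec f) : Primrec fun a => (f a).1 := Primrec.fst.comp hf

theorem Primrec.proj_snd {β γ : Type*} [Primcodable β] [Primcodable γ] {f : α → β × γ}
    (hf : Primrec f) : Primrec fun a => (f a).2 := Primrec.snd.comp hf

theorem Primrec.add {f g : α → ℕ} (hf : Primrec f) (hg : Primrec g) :
    Primrec fun a => f a + g a := Primrec.nat_add.comp hf hg

theorem Primrec.sub {f g : α → ℕ} (hf : Primrec f) (hg : Primrec g) :
    Primrec fun a => f a - g a := Primrec.nat_sub.comp hf hg

theorem Primrec.mul {f g : α → ℕ} (hf : Primrec f) (hg : Primrec g) :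
    Primrec fun a => f a * g a := Primrec.nat_mul.comp hf hg

theorem Primrec.div {f g : α → ℕ} (hf : Primrec f) (hg : Primrec g) :
    Primrec fun a => f a / g a := Primrec.nat_div.comp hf hg

theorem Primrec.mod {f g : α → ℕ} (hf : Primrec f) (hg : Primrec g) :
    Primrec fun a => f a % g a := Primrec.nat_mod.comp hf hg

theorem Primrec.pow {f g : α → ℕ} (hf : Primrec f) (hg : Primrec g) :
    Primrec fun a => f a ^ g a :=
  (Primrec₂.unpaired'.1 Nat.Primrec.pow).comp hf hg

theorem Primrec.natPair {f g : α → ℕ} (hf : Primrec f) (hg : Primrec g) :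
    Primrec fun a => Nat.pair (f a) (g a) := Primrec₂.natPair.comp hf hg

theorem Primrec.unpairFst {f : α → ℕ} (hf : Primrec f) :
    Primrec fun a => (f a).unpair.1 := Primrec.fst.comp (Primrec.unpair.comp hf)

theorem Primrec.unpairSnd {f : α → ℕ} (hf : Primrec f) :
    Primrec fun a => (f a).unpair.2 := Primrec.snd.comp (Primrec.unpair.comp hf)

theorem PrimrecPred.le {f g : α → ℕ} (hf : Primrec f) (hg : Primrec g) :
    PrimrecPred fun a => f a ≤ g a := Primrec.nat_le.comp hf hg

theorem PrimrecPred.lt {f g : α → ℕ} (hf : Primrec f) (hg : Primrec g) :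
    PrimrecPred fun a => f a < g a := Primrec.nat_lt.comp hf hg

theorem PrimrecPred.nat_eq {f g : α → ℕ} (hf : Primrec f) (hg : Primrec g) :
    PrimrecPred fun a => f a = g a := Primrec.eq.comp hf hg

theorem PrimrecPred.imp {p q : α → Prop} (hp : PrimrecPred p) (hq : PrimrecPred q) :
    PrimrecPred fun a => p a → q a :=
  (hp.not.or hq).of_eq fun _ => imp_iff_not_or.symm

theorem PrimrecPred.iff {p q : α → Prop} (hp : PrimrecPred p) (hq : PrimrecPred q) :
    PrimrecPred fun a => (p a ↔ q a) :=
  ((hp.imp hq).and (hq.imp hp)).of_eq fun _ => iff_iff_implies_and_implies.symm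

theorem PrimrecPred.ball {f : α → ℕ} {P : α → ℕ → Prop} (hf : Primrec f)
    (hP : PrimrecPred fun p : α × ℕ => P p.1 p.2) :
    PrimrecPred fun a => ∀ y < f a, P a y := by
  have h : PrimrecRel fun (y : ℕ) (a : α) => P a y :=
    PrimrecPred.comp hP (Primrec.snd.pair Primrec.fst)
  exact ((PrimrecRel.forall_mem_list h).comp (Primrec.list_range.comp hf) Primrec.id).of_eq
    fun a => by simp

theorem PrimrecPred.bex {f : α → ℕ} {P : α → ℕ → Prop} (hf : Primrec f)
    (hP : PrimrecPred fun p : α × ℕ => P p.1 p.2) :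
    PrimrecPred fun a => ∃ y < f a, P a y := by
  have h : PrimrecRel fun (y : ℕ) (a : α) => P a y :=
    PrimrecPred.comp hP (Primrec.snd.pair Primrec.fst)
  exact ((PrimrecRel.exists_mem_list h).comp (Primrec.list_range.comp hf) Primrec.id).of_eq
    fun a => by simp

theorem PrimrecPred.ball_le {f : α → ℕ} {P : α → ℕ → Prop} (hf : Primrec f)
    (hP : PrimrecPred fun p : α × ℕ => P p.1 p.2) :
    PrimrecPred fun a => ∀ y ≤ f a, P a y :=
  (PrimrecPred.ball (Primrec.succ.comp hf) hP).of_eq fun _ => by simp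

theorem PrimrecPred.bex_le {f : α → ℕ} {P : α → ℕ → Prop} (hf : Primrec f)
    (hP : PrimrecPred fun p : α × ℕ => P p.1 p.2) :
    PrimrecPred fun a => ∃ y ≤ f a, P a y :=
  (PrimrecPred.bex (Primrec.succ.comp hf) hP).of_eq fun _ => by simp

theorem PrimrecPred.testBit {f g : α → ℕ} (hf : Primrec f) (hg : Primrec g) :
    PrimrecPred fun a => (f a).testBit (g a) = true :=
  (PrimrecPred.nat_eq (((hf.div ((Primrec.const 2).pow hg))).mod (Primrec.const 2))
    (Primrec.const 1)).of_eq fun a => by simp [Nat.testBit_eq_decide_div_mod_eq]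

open Classical in
/-- The number of `x < n` satisfying `p`. -/
noncomputable def cnt (n : ℕ) (p : ℕ → Prop) : ℕ := ((Finset.range n).filter p).card

theorem cnt_eq_card (n : ℕ) (p : ℕ → Prop) [DecidablePred p] :
    cnt n p = ((Finset.range n).filter p).card := by
  unfold cnt
  congr

theorem cnt_zero (p : ℕ → Prop) : cnt 0 p = 0 := by simp [cnt]

open Classical in
theorem cnt_succ (n : ℕ) (p : ℕ → Prop) : cnt (n + 1) p = cnt n p + if p n then 1 else 0 := by
  unfold cnt
  rw [Finset.range_add_one, Finset.filter_insert]
  split_ifs <;> simp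

theorem Primrec.cnt {f : α → ℕ} {P : α → ℕ → Prop} (hf : Primrec f)
    (hP : PrimrecPred fun p : α × ℕ => P p.1 p.2) :
    Primrec fun a => cnt (f a) (P a) := by
  classical
  have h : Primrec₂ fun (a : α) (q : ℕ × ℕ) => q.2 + if P a q.1 then 1 else 0 := by
    refine Primrec.add (Primrec.snd.comp Primrec.snd) (Primrec.ite ?_ (.const 1) (.const 0))
    exact PrimrecPred.comp hP (Primrec.fst.pair (Primrec.fst.comp Primrec.snd))
  refine (Primrec.nat_rec' hf (Primrec.const 0) h).of_eq fun a => ?_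
  induction f a with
  | zero => simp [cnt_zero]
  | succ n ih => rw [cnt_succ, ← ih]

end Primrec

namespace MinimalPair

open Nat.Partrec (Code)

/-! ### The construction -/

/-- The number of oracle bits consulted on the block `[2 ^ k, 2 ^ (k + 1))`. -/
def lev (k : ℕ) : ℕ := Nat.findGreatest (fun l => 4 ^ (l + 1) ≤ k) k

/-- The binary digit that the string `σ` on side `s` uses at scale `i`. -/
def bitIdx (l s σ i : ℕ) : ℕ := 2 * (σ * (l + 1) + i) + s

/-- The portion of block `k` that `σ` on side `s` may omit at scale `u`. -/
def Omit (s u k x σ : ℕ) : Prop := ∀ i ≤ u, ¬ x.testBit (bitIdx (lev k) s σ i) = true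

/-- The opponent coded by `r` has enumerated `y` by stage `t`. -/
def Enum (r t y : ℕ) : Prop :=
  Code.evaln t (Denumerable.ofNat Code r.unpair.1) y = some 1

/-- By stage `t` the opponent has enumerated at least half of block `k`. -/
def Resp (r k t : ℕ) : Prop := 2 ^ k ≤ 2 * cnt (2 ^ k) fun x => Enum r t (2 ^ k + x)

/-- By stage `t` the opponent has responded on the blocks below `m`. -/
def RespBelow (r m t : ℕ) : Prop := ∀ k < m, r.unpair.2 ≤ k → Resp r k t

/-- The requirement `r` acts on block `k`. -/
def Active (r k : ℕ) : Prop :=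
  4 ≤ k ∧ r.unpair.2 ≤ k ∧ ∃ m ≤ k, RespBelow r m k ∧ ∀ t < k, ¬ RespBelow r m t

/-- `z` codes an active block with its response stage. -/
def Valid (r z : ℕ) : Prop :=
  Active r z.unpair.1 ∧ Resp r z.unpair.1 z.unpair.2 ∧ ∀ t < z.unpair.2, ¬ Resp r z.unpair.1 t

/-- The number of oracle bits consulted on the block coded by `z`. -/
def levz (z : ℕ) : ℕ := lev z.unpair.1

/-- The opponent enumerates the `x`-th element of the block coded by `z`. -/
def Got (r z x : ℕ) : Prop := Enum r z.unpair.2 (2 ^ z.unpair.1 + x)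

/-- At least three quarters of the portion omitted by `σ` is missed by the opponent. -/
def Safe (s r z u σ : ℕ) : Prop :=
  3 * 2 ^ z.unpair.1 ≤ 4 * 2 ^ (u + 1) *
    cnt (2 ^ z.unpair.1) fun x => ¬ Got r z x ∧ Omit s u z.unpair.1 x σ

/-- The opponent enumerates an element omitted by both `σ` and `τ`. -/
def Hit (s r z u v σ τ : ℕ) : Prop :=
  ∃ x < 2 ^ z.unpair.1, Got r z x ∧ Omit s u z.unpair.1 x σ ∧ Omit (1 - s) v z.unpair.1 x τ

/-- No extension of `σ` is safe at `z`. -/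
def NoSafe (s r z c σ u : ℕ) : Prop :=
  Valid r z ∧ c ≤ levz z ∧ ∀ σ' < 2 ^ levz z, σ' % 2 ^ c = σ → ¬ Safe s r z u σ'

/-- All pairs of extensions of `σ` and `τ` are hit at `z`. -/
def AllHit (s r z c σ d τ u v : ℕ) : Prop :=
  Valid r z ∧ c ≤ levz z ∧ ∀ σ' < 2 ^ levz z, σ' % 2 ^ c = σ →
    ∀ τ' < 2 ^ levz z, τ' % 2 ^ d = τ → Hit s r z u v σ' τ'

/-- The body of `Bg`. -/
def BgAt (s r m t c σ u a : ℕ) : Prop :=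
  u + 1 ≤ a ∧ (∀ u' ≤ u + 1, ∃ z < t, m ≤ z ∧ NoSafe s r z a (σ % 2 ^ a) u') ∧
    ∀ v ≤ a, ∀ τ < 2 ^ a, (∀ z < t, NoSafe (1 - s) r z a τ v → z ≤ c) ∨
      ∃ z < t, m ≤ z ∧ AllHit s r z c σ a τ u v

/-- Stage `t` gives evidence beyond `m` that `c` is a large enough length. -/
def Bg (s r m t c σ u : ℕ) : Prop := ∃ a ≤ c, BgAt s r m t c σ u a

/-- Stage `t` is the first to give evidence beyond some `m`. -/
def Fresh (s r c σ u t : ℕ) : Prop :=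
  ∃ m < t, Bg s r m t c σ u ∧ ∀ t' < t, ¬ Bg s r m t' c σ u

/-- The guess that no shorter length is large enough is challenged at stage `t`. -/
def Ev (s r c σ u τ v t : ℕ) : Prop :=
  ∃ c' < c, Fresh s r c' (σ % 2 ^ c') u t ∨ Fresh (1 - s) r c' (τ % 2 ^ c') v t

/-- By stage `S`, it is known that the guess `(c, τ, v)` does not choose `z`. -/
def NotKept (s r c σ u τ v z S : ℕ) : Prop :=
  ¬ AllHit s r z c σ c τ u v ∨ (∃ t < S, z ≤ t ∧ Ev s r c σ u τ v t) ∨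
    ∃ z' < z, AllHit s r z' c σ c τ u v ∧ ∀ t < z, z' ≤ t → ¬ Ev s r c σ u τ v t

/-- By stage `S`, the omission of block `k` at scale `u` for requirement `r` is released. -/
def Released (s r u k σ S : ℕ) : Prop :=
  ∃ ρ < S, Valid r (Nat.pair k ρ) ∧ ∀ c ≤ lev k, u ≤ c → ∀ v ≤ c, ∀ τ < 2 ^ c,
    NotKept s r c (σ % 2 ^ c) u τ v (Nat.pair k ρ) S

/-- By stage `S`, the element `x` of block `k` is enumerated. -/
def Put (s k x σ S : ℕ) : Prop :=
  ∀ u ≤ lev k, Omit s u k x σ → ∀ r ≤ u, Active r k → Released s r u k σ S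

end MinimalPair

namespace MinimalPair

open Nat.Partrec (Code)

open Primrec PrimrecPred

section

variable {α : Type*} [Primcodable α] {s r z c σ d τ u v t m a S k x i l : α → ℕ}

theorem lev_primrec (hk : Primrec k) : Primrec fun a => lev (k a) := by
  have h : Primrec lev := by
    unfold lev
    refine Primrec.nat_findGreatest Primrec.id ?_
    exact PrimrecPred.le (Primrec.pow (.const 4) (.add Primrec.snd (.const 1))) Primrec.fst
  exact h.comp hk

theorem levz_primrec (hz : Primrec z) : Primrec fun a => levz (z a) :=
  lev_primrec (Primrec.unpairFst hz)

theorem bitIdx_primrec (hl : Primrec l) (hs : Primrec s) (hσ : Primrec σ) (hi : Primrec i) :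
    Primrec fun a => bitIdx (l a) (s a) (σ a) (i a) := by
  unfold bitIdx
  apply_rules (transparency := .reducible) (maxDepth := 1000)
      [Primrec.add, Primrec.mul, Primrec.const]

theorem omit_primrec (hs : Primrec s) (hu : Primrec u) (hk : Primrec k) (hx : Primrec x)
    (hσ : Primrec σ) : PrimrecPred fun a => Omit (s a) (u a) (k a) (x a) (σ a) := by
  have h : PrimrecPred fun a : ℕ × ℕ × ℕ × ℕ × ℕ =>
      Omit a.1 a.2.1 a.2.2.1 a.2.2.2.1 a.2.2.2.2 := by
    unfold Omit
    apply_rules (transparency := .reducible) (maxDepth := 1000)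
      [PrimrecPred.ball_le, PrimrecPred.not, PrimrecPred.testBit, bitIdx_primrec, lev_primrec,
       Primrec.proj_fst, Primrec.proj_snd, Primrec.self]
  exact PrimrecPred.comp (p := fun a : ℕ × ℕ × ℕ × ℕ × ℕ =>
    Omit a.1 a.2.1 a.2.2.1 a.2.2.2.1 a.2.2.2.2) h (hs.pair (hu.pair (hk.pair (hx.pair hσ))))

theorem enum_primrec (hr : Primrec r) (ht : Primrec t) (hx : Primrec x) :
    PrimrecPred fun a => Enum (r a) (t a) (x a) := by
  unfold Enum
  refine Primrec.eq.comp ?_ (Primrec.const _)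
  exact Code.primrec_evaln.comp
    ((ht.pair ((Primrec.ofNat Code).comp (Primrec.unpairFst hr))).pair hx)

theorem resp_primrec (hr : Primrec r) (hk : Primrec k) (ht : Primrec t) :
    PrimrecPred fun a => Resp (r a) (k a) (t a) := by
  have h : PrimrecPred fun a : ℕ × ℕ × ℕ =>
      Resp a.1 a.2.1 a.2.2 := by
    unfold Resp
    apply_rules (transparency := .reducible) (maxDepth := 1000)
      [PrimrecPred.le, Primrec.add, Primrec.mul, Primrec.pow, Primrec.cnt, enum_primrec,
       Primrec.const, Primrec.proj_fst, Primrec.proj_snd, Primrec.self]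
  exact PrimrecPred.comp (p := fun a : ℕ × ℕ × ℕ =>
    Resp a.1 a.2.1 a.2.2) h (hr.pair (hk.pair ht))

theorem respBelow_primrec (hr : Primrec r) (hm : Primrec m) (ht : Primrec t) :
    PrimrecPred fun a => RespBelow (r a) (m a) (t a) := by
  have h : PrimrecPred fun a : ℕ × ℕ × ℕ =>
      RespBelow a.1 a.2.1 a.2.2 := by
    unfold RespBelow
    apply_rules (transparency := .reducible) (maxDepth := 1000)
      [PrimrecPred.ball, PrimrecPred.imp, PrimrecPred.le, Primrec.unpairSnd, resp_primrec,
       Primrec.proj_fst, Primrec.proj_snd, Primrec.self]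
  exact PrimrecPred.comp (p := fun a : ℕ × ℕ × ℕ =>
    RespBelow a.1 a.2.1 a.2.2) h (hr.pair (hm.pair ht))

theorem active_primrec (hr : Primrec r) (hk : Primrec k) :
    PrimrecPred fun a => Active (r a) (k a) := by
  have h : PrimrecPred fun a : ℕ × ℕ =>
      Active a.1 a.2 := by
    unfold Active
    apply_rules (transparency := .reducible) (maxDepth := 1000)
      [PrimrecPred.ball, PrimrecPred.bex_le, PrimrecPred.and, PrimrecPred.not, PrimrecPred.le,
       Primrec.const, Primrec.unpairSnd, respBelow_primrec, Primrec.proj_fst, Primrec.proj_snd,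
       Primrec.self]
  exact PrimrecPred.comp (p := fun a : ℕ × ℕ =>
    Active a.1 a.2) h (hr.pair hk)

theorem valid_primrec (hr : Primrec r) (hz : Primrec z) :
    PrimrecPred fun a => Valid (r a) (z a) := by
  have h : PrimrecPred fun a : ℕ × ℕ =>
      Valid a.1 a.2 := by
    unfold Valid
    apply_rules (transparency := .reducible) (maxDepth := 1000)
      [PrimrecPred.ball, PrimrecPred.and, PrimrecPred.not, Primrec.unpairFst, Primrec.unpairSnd,
       active_primrec, resp_primrec, Primrec.proj_fst, Primrec.proj_snd, Primrec.self]
  exact PrimrecPred.comp (p := fun a : ℕ × ℕ =>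
    Valid a.1 a.2) h (hr.pair hz)

theorem got_primrec (hr : Primrec r) (hz : Primrec z) (hx : Primrec x) :
    PrimrecPred fun a => Got (r a) (z a) (x a) := by
  have h : PrimrecPred fun a : ℕ × ℕ × ℕ =>
      Got a.1 a.2.1 a.2.2 := by
    unfold Got
    apply_rules (transparency := .reducible) (maxDepth := 1000)
      [Primrec.const, Primrec.add, Primrec.pow, Primrec.unpairFst, Primrec.unpairSnd,
       enum_primrec, Primrec.proj_fst, Primrec.proj_snd, Primrec.self]
  exact PrimrecPred.comp (p := fun a : ℕ × ℕ × ℕ =>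
    Got a.1 a.2.1 a.2.2) h (hr.pair (hz.pair hx))

theorem safe_primrec (hs : Primrec s) (hr : Primrec r) (hz : Primrec z) (hu : Primrec u)
    (hσ : Primrec σ) :
    PrimrecPred fun a => Safe (s a) (r a) (z a) (u a) (σ a) := by
  have h : PrimrecPred fun a : ℕ × ℕ × ℕ × ℕ × ℕ =>
      Safe a.1 a.2.1 a.2.2.1 a.2.2.2.1 a.2.2.2.2 := by
    unfold Safe
    apply_rules (transparency := .reducible) (maxDepth := 1000)
      [PrimrecPred.and, PrimrecPred.not, PrimrecPred.le, Primrec.const, Primrec.add, Primrec.mul,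
       Primrec.pow, Primrec.unpairFst, got_primrec, omit_primrec, Primrec.cnt, Primrec.proj_fst,
       Primrec.proj_snd, Primrec.self]
  exact PrimrecPred.comp (p := fun a : ℕ × ℕ × ℕ × ℕ × ℕ =>
    Safe a.1 a.2.1 a.2.2.1 a.2.2.2.1 a.2.2.2.2) h (hs.pair (hr.pair (hz.pair (hu.pair hσ))))

theorem hit_primrec (hs : Primrec s) (hr : Primrec r) (hz : Primrec z) (hu : Primrec u)
    (hv : Primrec v) (hσ : Primrec σ) (hτ : Primrec τ) :
    PrimrecPred fun a => Hit (s a) (r a) (z a) (u a) (v a) (σ a) (τ a) := by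
  have h : PrimrecPred fun a : ℕ × ℕ × ℕ × ℕ × ℕ × ℕ × ℕ =>
      Hit a.1 a.2.1 a.2.2.1 a.2.2.2.1 a.2.2.2.2.1 a.2.2.2.2.2.1 a.2.2.2.2.2.2 := by
    unfold Hit
    apply_rules (transparency := .reducible) (maxDepth := 1000)
      [PrimrecPred.bex, PrimrecPred.and, Primrec.const, Primrec.sub, Primrec.pow,
       Primrec.unpairFst, got_primrec, omit_primrec, Primrec.proj_fst, Primrec.proj_snd,
       Primrec.self]
  exact PrimrecPred.comp (p := fun a : ℕ × ℕ × ℕ × ℕ × ℕ × ℕ × ℕ =>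
    Hit a.1 a.2.1 a.2.2.1 a.2.2.2.1 a.2.2.2.2.1 a.2.2.2.2.2.1 a.2.2.2.2.2.2) h
      (hs.pair (hr.pair (hz.pair (hu.pair (hv.pair (hσ.pair hτ))))))

theorem noSafe_primrec (hs : Primrec s) (hr : Primrec r) (hz : Primrec z) (hc : Primrec c)
    (hσ : Primrec σ) (hu : Primrec u) :
    PrimrecPred fun a => NoSafe (s a) (r a) (z a) (c a) (σ a) (u a) := by
  have h : PrimrecPred fun a : ℕ × ℕ × ℕ × ℕ × ℕ × ℕ =>
      NoSafe a.1 a.2.1 a.2.2.1 a.2.2.2.1 a.2.2.2.2.1 a.2.2.2.2.2 := by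
    unfold NoSafe
    apply_rules (transparency := .reducible) (maxDepth := 1000)
      [PrimrecPred.ball, PrimrecPred.and, PrimrecPred.not, PrimrecPred.imp, PrimrecPred.le,
       PrimrecPred.nat_eq, Primrec.const, Primrec.mod, Primrec.pow, levz_primrec, valid_primrec,
       safe_primrec, Primrec.proj_fst, Primrec.proj_snd, Primrec.self]
  exact PrimrecPred.comp (p := fun a : ℕ × ℕ × ℕ × ℕ × ℕ × ℕ =>
    NoSafe a.1 a.2.1 a.2.2.1 a.2.2.2.1 a.2.2.2.2.1 a.2.2.2.2.2) h
      (hs.pair (hr.pair (hz.pair (hc.pair (hσ.pair hu)))))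

theorem allHit_primrec (hs : Primrec s) (hr : Primrec r) (hz : Primrec z) (hc : Primrec c)
    (hσ : Primrec σ) (hd : Primrec d) (hτ : Primrec τ) (hu : Primrec u) (hv : Primrec v) :
    PrimrecPred fun a => AllHit (s a) (r a) (z a) (c a) (σ a) (d a) (τ a) (u a) (v a) := by
  have h : PrimrecPred fun a : ℕ × ℕ × ℕ × ℕ × ℕ × ℕ × ℕ × ℕ × ℕ =>
      AllHit a.1 a.2.1 a.2.2.1 a.2.2.2.1 a.2.2.2.2.1 a.2.2.2.2.2.1 a.2.2.2.2.2.2.1 a.2.2.2.2.2.2.2.1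
        a.2.2.2.2.2.2.2.2 := by
    unfold AllHit
    apply_rules (transparency := .reducible) (maxDepth := 1000)
      [PrimrecPred.ball, PrimrecPred.and, PrimrecPred.imp, PrimrecPred.le, PrimrecPred.nat_eq,
       Primrec.const, Primrec.mod, Primrec.pow, levz_primrec, valid_primrec, hit_primrec,
       Primrec.proj_fst, Primrec.proj_snd, Primrec.self]
  exact PrimrecPred.comp (p := fun a : ℕ × ℕ × ℕ × ℕ × ℕ × ℕ × ℕ × ℕ × ℕ =>
    AllHit a.1 a.2.1 a.2.2.1 a.2.2.2.1 a.2.2.2.2.1 a.2.2.2.2.2.1 a.2.2.2.2.2.2.1 a.2.2.2.2.2.2.2.1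
      a.2.2.2.2.2.2.2.2) h
      (hs.pair (hr.pair (hz.pair (hc.pair (hσ.pair (hd.pair (hτ.pair (hu.pair hv))))))))

theorem bgAt_primrec (hs : Primrec s) (hr : Primrec r) (hm : Primrec m) (ht : Primrec t)
    (hc : Primrec c) (hσ : Primrec σ) (hu : Primrec u) (hx : Primrec x) :
    PrimrecPred fun a => BgAt (s a) (r a) (m a) (t a) (c a) (σ a) (u a) (x a) := by
  have h : PrimrecPred fun a : ℕ × ℕ × ℕ × ℕ × ℕ × ℕ × ℕ × ℕ =>
      BgAt a.1 a.2.1 a.2.2.1 a.2.2.2.1 a.2.2.2.2.1 a.2.2.2.2.2.1 a.2.2.2.2.2.2.1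
        a.2.2.2.2.2.2.2 := by
    unfold BgAt
    apply_rules (transparency := .reducible) (maxDepth := 1000)
      [PrimrecPred.ball, PrimrecPred.bex, PrimrecPred.ball_le, PrimrecPred.and, PrimrecPred.or,
       PrimrecPred.imp, PrimrecPred.le, Primrec.const, Primrec.add, Primrec.sub, Primrec.mod,
       Primrec.pow, noSafe_primrec, allHit_primrec, Primrec.proj_fst, Primrec.proj_snd,
       Primrec.self]
  exact PrimrecPred.comp (p := fun a : ℕ × ℕ × ℕ × ℕ × ℕ × ℕ × ℕ × ℕ =>
    BgAt a.1 a.2.1 a.2.2.1 a.2.2.2.1 a.2.2.2.2.1 a.2.2.2.2.2.1 a.2.2.2.2.2.2.1 a.2.2.2.2.2.2.2) h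
      (hs.pair (hr.pair (hm.pair (ht.pair (hc.pair (hσ.pair (hu.pair hx)))))))

theorem bg_primrec (hs : Primrec s) (hr : Primrec r) (hm : Primrec m) (ht : Primrec t)
    (hc : Primrec c) (hσ : Primrec σ) (hu : Primrec u) :
    PrimrecPred fun a => Bg (s a) (r a) (m a) (t a) (c a) (σ a) (u a) := by
  have h : PrimrecPred fun a : ℕ × ℕ × ℕ × ℕ × ℕ × ℕ × ℕ =>
      Bg a.1 a.2.1 a.2.2.1 a.2.2.2.1 a.2.2.2.2.1 a.2.2.2.2.2.1 a.2.2.2.2.2.2 := by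
    unfold Bg
    apply_rules (transparency := .reducible) (maxDepth := 1000)
      [PrimrecPred.bex_le, bgAt_primrec, Primrec.proj_fst, Primrec.proj_snd, Primrec.self]
  exact PrimrecPred.comp (p := fun a : ℕ × ℕ × ℕ × ℕ × ℕ × ℕ × ℕ =>
    Bg a.1 a.2.1 a.2.2.1 a.2.2.2.1 a.2.2.2.2.1 a.2.2.2.2.2.1 a.2.2.2.2.2.2) h
      (hs.pair (hr.pair (hm.pair (ht.pair (hc.pair (hσ.pair hu))))))

theorem fresh_primrec (hs : Primrec s) (hr : Primrec r) (hc : Primrec c) (hσ : Primrec σ)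
    (hu : Primrec u) (ht : Primrec t) :
    PrimrecPred fun a => Fresh (s a) (r a) (c a) (σ a) (u a) (t a) := by
  have h : PrimrecPred fun a : ℕ × ℕ × ℕ × ℕ × ℕ × ℕ =>
      Fresh a.1 a.2.1 a.2.2.1 a.2.2.2.1 a.2.2.2.2.1 a.2.2.2.2.2 := by
    unfold Fresh
    apply_rules (transparency := .reducible) (maxDepth := 1000)
      [PrimrecPred.ball, PrimrecPred.bex, PrimrecPred.and, PrimrecPred.not, bg_primrec,
       Primrec.proj_fst, Primrec.proj_snd, Primrec.self]
  exact PrimrecPred.comp (p := fun a : ℕ × ℕ × ℕ × ℕ × ℕ × ℕ =>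
    Fresh a.1 a.2.1 a.2.2.1 a.2.2.2.1 a.2.2.2.2.1 a.2.2.2.2.2) h
      (hs.pair (hr.pair (hc.pair (hσ.pair (hu.pair ht)))))

theorem ev_primrec (hs : Primrec s) (hr : Primrec r) (hc : Primrec c) (hσ : Primrec σ)
    (hu : Primrec u) (hτ : Primrec τ) (hv : Primrec v) (ht : Primrec t) :
    PrimrecPred fun a => Ev (s a) (r a) (c a) (σ a) (u a) (τ a) (v a) (t a) := by
  have h : PrimrecPred fun a : ℕ × ℕ × ℕ × ℕ × ℕ × ℕ × ℕ × ℕ =>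
      Ev a.1 a.2.1 a.2.2.1 a.2.2.2.1 a.2.2.2.2.1 a.2.2.2.2.2.1 a.2.2.2.2.2.2.1 a.2.2.2.2.2.2.2 := by
    unfold Ev
    apply_rules (transparency := .reducible) (maxDepth := 1000)
      [PrimrecPred.bex, PrimrecPred.or, Primrec.const, Primrec.sub, Primrec.mod, Primrec.pow,
       fresh_primrec, Primrec.proj_fst, Primrec.proj_snd, Primrec.self]
  exact PrimrecPred.comp (p := fun a : ℕ × ℕ × ℕ × ℕ × ℕ × ℕ × ℕ × ℕ =>
    Ev a.1 a.2.1 a.2.2.1 a.2.2.2.1 a.2.2.2.2.1 a.2.2.2.2.2.1 a.2.2.2.2.2.2.1 a.2.2.2.2.2.2.2) h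
      (hs.pair (hr.pair (hc.pair (hσ.pair (hu.pair (hτ.pair (hv.pair ht)))))))

theorem notKept_primrec (hs : Primrec s) (hr : Primrec r) (hc : Primrec c) (hσ : Primrec σ)
    (hu : Primrec u) (hτ : Primrec τ) (hv : Primrec v) (hz : Primrec z) (hS : Primrec S) :
    PrimrecPred fun a => NotKept (s a) (r a) (c a) (σ a) (u a) (τ a) (v a) (z a) (S a) := by
  have h : PrimrecPred fun a : ℕ × ℕ × ℕ × ℕ × ℕ × ℕ × ℕ × ℕ × ℕ =>
      NotKept a.1 a.2.1 a.2.2.1 a.2.2.2.1 a.2.2.2.2.1 a.2.2.2.2.2.1 a.2.2.2.2.2.2.1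
        a.2.2.2.2.2.2.2.1 a.2.2.2.2.2.2.2.2 := by
    unfold NotKept
    apply_rules (transparency := .reducible) (maxDepth := 1000)
      [PrimrecPred.ball, PrimrecPred.bex, PrimrecPred.and, PrimrecPred.or, PrimrecPred.not,
       PrimrecPred.imp, PrimrecPred.le, allHit_primrec, ev_primrec, Primrec.proj_fst,
       Primrec.proj_snd, Primrec.self]
  exact PrimrecPred.comp (p := fun a : ℕ × ℕ × ℕ × ℕ × ℕ × ℕ × ℕ × ℕ × ℕ =>
    NotKept a.1 a.2.1 a.2.2.1 a.2.2.2.1 a.2.2.2.2.1 a.2.2.2.2.2.1 a.2.2.2.2.2.2.1 a.2.2.2.2.2.2.2.1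
      a.2.2.2.2.2.2.2.2) h
      (hs.pair (hr.pair (hc.pair (hσ.pair (hu.pair (hτ.pair (hv.pair (hz.pair hS))))))))

theorem released_primrec (hs : Primrec s) (hr : Primrec r) (hu : Primrec u) (hk : Primrec k)
    (hσ : Primrec σ) (hS : Primrec S) :
    PrimrecPred fun a => Released (s a) (r a) (u a) (k a) (σ a) (S a) := by
  have h : PrimrecPred fun a : ℕ × ℕ × ℕ × ℕ × ℕ × ℕ =>
      Released a.1 a.2.1 a.2.2.1 a.2.2.2.1 a.2.2.2.2.1 a.2.2.2.2.2 := by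
    unfold Released
    apply_rules (transparency := .reducible) (maxDepth := 1000)
      [PrimrecPred.ball, PrimrecPred.bex, PrimrecPred.ball_le, PrimrecPred.and, PrimrecPred.imp,
       PrimrecPred.le, Primrec.const, Primrec.mod, Primrec.pow, Primrec.natPair, lev_primrec,
       valid_primrec, notKept_primrec, Primrec.proj_fst, Primrec.proj_snd, Primrec.self]
  exact PrimrecPred.comp (p := fun a : ℕ × ℕ × ℕ × ℕ × ℕ × ℕ =>
    Released a.1 a.2.1 a.2.2.1 a.2.2.2.1 a.2.2.2.2.1 a.2.2.2.2.2) h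
      (hs.pair (hr.pair (hu.pair (hk.pair (hσ.pair hS)))))

theorem put_primrec (hs : Primrec s) (hk : Primrec k) (hx : Primrec x) (hσ : Primrec σ)
    (hS : Primrec S) :
    PrimrecPred fun a => Put (s a) (k a) (x a) (σ a) (S a) := by
  have h : PrimrecPred fun a : ℕ × ℕ × ℕ × ℕ × ℕ =>
      Put a.1 a.2.1 a.2.2.1 a.2.2.2.1 a.2.2.2.2 := by
    unfold Put
    apply_rules (transparency := .reducible) (maxDepth := 1000)
      [PrimrecPred.ball_le, PrimrecPred.imp, lev_primrec, omit_primrec, active_primrec,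
       released_primrec, Primrec.proj_fst, Primrec.proj_snd, Primrec.self]
  exact PrimrecPred.comp (p := fun a : ℕ × ℕ × ℕ × ℕ × ℕ =>
    Put a.1 a.2.1 a.2.2.1 a.2.2.2.1 a.2.2.2.2) h (hs.pair (hk.pair (hx.pair (hσ.pair hS))))

end

end MinimalPair

/-! ### Relative computability -/

theorem RecIn.of_partrec {O f : ℕ →. ℕ} (hf : Nat.Partrec f) : RecIn O f := by
  induction hf with
  | zero => exact RecIn.zero
  | succ => exact RecIn.succ
  | left => exact RecIn.left
  | right => exact RecIn.right
  | pair _ _ h₁ h₂ => exact RecIn.pair h₁ h₂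
  | comp _ _ h₁ h₂ => exact RecIn.comp h₁ h₂
  | prec _ _ h₁ h₂ => exact RecIn.prec h₁ h₂
  | rfind _ h => exact RecIn.rfind h

theorem RecIn.of_eq {O f g : ℕ →. ℕ} (hf : RecIn O f) (h : ∀ n, f n = g n) : RecIn O g :=
  (funext h : f = g) ▸ hf

theorem rfind_decide_dom {p : ℕ → Prop} [DecidablePred p] :
    (Nat.rfind fun z => Part.some (decide (p z))).Dom ↔ ∃ z, p z := by
  refine Nat.rfind_dom.trans (exists_congr fun z => ?_)
  simp

theorem RecIn.of_primrec {O : ℕ →. ℕ} {f : ℕ → ℕ} (hf : Primrec f) :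
    RecIn O fun n => Part.some (f n) :=
  RecIn.of_partrec (Nat.Partrec.of_primrec (Primrec.nat_iff.1 hf))

theorem RecIn.comp_primrec {O : ℕ →. ℕ} {g : ℕ →. ℕ} {f : ℕ → ℕ} (hg : RecIn O g)
    (hf : Primrec f) : RecIn O fun n => g (f n) :=
  (RecIn.comp hg (RecIn.of_primrec (O := O) hf)).of_eq fun _ => Part.bind_some _ _

theorem RecIn.pair_total {O : ℕ →. ℕ} {f g : ℕ → ℕ} (hf : RecIn O fun n => Part.some (f n))
    (hg : RecIn O fun n => Part.some (g n)) :
    RecIn O fun n => Part.some (Nat.pair (f n) (g n)) := by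
  have h := RecIn.pair hf hg
  simpa [Seq.seq] using h

theorem RecIn.comp_total {O : ℕ →. ℕ} {g : ℕ →. ℕ} {f : ℕ → ℕ} (hg : RecIn O g)
    (hf : RecIn O fun n => Part.some (f n)) : RecIn O fun n => g (f n) :=
  (RecIn.comp hg hf).of_eq fun _ => Part.bind_some _ _

namespace MinimalPair

open Nat.Partrec (Code)

open Classical in
/-- The initial segment of `X` of length `c`, coded in binary. -/
noncomputable def seg (X : Set ℕ) : ℕ → ℕ
  | 0 => 0
  | c + 1 => seg X c + if c ∈ X then 2 ^ c else 0

theorem seg_lt (X : Set ℕ) (c : ℕ) : seg X c < 2 ^ c := by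
  induction c with
  | zero => simp [seg]
  | succ c ih => rw [seg, pow_succ]; split_ifs <;> omega

open Classical in
theorem seg_mod (X : Set ℕ) {c d : ℕ} (h : c ≤ d) : seg X d % 2 ^ c = seg X c := by
  induction d, h using Nat.le_induction with
  | base => exact Nat.mod_eq_of_lt (seg_lt X c)
  | succ d hd ih =>
    rw [seg, Nat.add_mod, ih]
    have : (if d ∈ X then 2 ^ d else 0) % 2 ^ c = 0 := by
      split_ifs
      · exact Nat.mod_eq_zero_of_dvd (pow_dvd_pow 2 hd)
      · simp
    rw [this, add_zero, Nat.mod_eq_of_lt (seg_lt X c)]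

theorem testBit_seg (X : Set ℕ) {c n : ℕ} (h : n < c) :
    (seg X c).testBit n = true ↔ n ∈ X := by
  have h1 : (seg X c).testBit n = (seg X (n + 1)).testBit n := by
    rw [← seg_mod X h, Nat.testBit_mod_two_pow]; simp
  rw [h1, seg]
  have h2 := seg_lt X n
  split_ifs with hn
  · simp [hn, Nat.testBit_eq_decide_div_mod_eq, Nat.add_div_right, Nat.div_eq_of_lt h2]
  · simp [hn, Nat.testBit_lt_two_pow h2]

theorem recIn_seg (X : Set ℕ) : RecIn (chi X) fun n => Part.some (seg X n) := by
  classical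
  have h1 : RecIn (chi X) fun n => Part.some (if n.unpair.2.unpair.1 ∈ X then 1 else 0) :=
    RecIn.comp_primrec (g := chi X) RecIn.oracle
      (Primrec.unpairFst (Primrec.unpairSnd Primrec.self))
  have h2 : Primrec fun n : ℕ =>
      n.unpair.2.unpair.2.unpair.2 + n.unpair.1 * 2 ^ n.unpair.2.unpair.2.unpair.1 := by
    apply_rules (transparency := .reducible) (maxDepth := 1000) [Primrec.add, Primrec.mul,
      Primrec.pow, Primrec.const, Primrec.unpairFst, Primrec.unpairSnd, Primrec.self]
  have h3 := RecIn.comp_total (RecIn.of_primrec (O := chi X) h2)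
    (RecIn.pair_total h1 (RecIn.of_primrec Primrec.self))
  have h4 := RecIn.comp_primrec (RecIn.prec (RecIn.of_primrec (O := chi X) (Primrec.const 0)) h3)
    (f := fun n => Nat.pair 0 n) (Primrec.natPair (.const 0) Primrec.self)
  refine h4.of_eq fun n => ?_
  simp only [Nat.unpaired, Nat.unpair_pair]
  induction n with
  | zero => rfl
  | succ n ih =>
    simp only at ih ⊢
    rw [ih]
    simp only [seg, Part.bind_eq_bind, Part.bind_some]
    split_ifs <;> simp

theorem recIn_search (X : Set ℕ) {f : ℕ → ℕ} (hf : Primrec f) {P : ℕ → ℕ → ℕ → Prop}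
    (hP : PrimrecPred fun a : ℕ × ℕ × ℕ => P a.1 a.2.1 a.2.2) :
    ∃ φ : ℕ →. ℕ, RecIn (chi X) φ ∧ (∀ y, (φ y).Dom ↔ ∃ S, P y (seg X (f y)) S) ∧
      ∀ y v, v ∈ φ y → v = 1 := by
  classical
  have h0 : PrimrecPred fun p : ℕ × ℕ => P p.1.unpair.1 p.1.unpair.2 p.2 :=
    PrimrecPred.comp (p := fun a : ℕ × ℕ × ℕ => P a.1 a.2.1 a.2.2) hP
      ((Primrec.unpairFst Primrec.fst).pair ((Primrec.unpairSnd Primrec.fst).pair Primrec.snd))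
  have h1 : Partrec fun n : ℕ =>
      Nat.rfind fun S => Part.some (decide (P n.unpair.1 n.unpair.2 S)) := by
    refine Partrec.rfind (p := fun (n : ℕ) (S : ℕ) => Part.some
      (decide (P n.unpair.1 n.unpair.2 S))) ?_
    exact h0.decide.to_comp.partrec
  have h2 := Partrec.map (g := fun (_ : ℕ) (_ : ℕ) => 1) h1 (Computable.const 1).to₂
  have h3 := RecIn.comp_total (RecIn.of_partrec (O := chi X) (Partrec.nat_iff.1 h2))
    (RecIn.pair_total (RecIn.of_primrec Primrec.self)
      (RecIn.comp_primrec (g := fun n => Part.some (seg X n)) (recIn_seg X) hf))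
  refine ⟨_, h3, fun y => ?_, fun y v hv => ?_⟩
  · simpa using rfind_decide_dom
  · simp at hv
    exact hv.2.symm

/-- The limit lemma, in the form used below. -/
theorem delta2_of_witness {X : Set ℕ} {R : ℕ → ℕ → ℕ → Prop}
    (hR : PrimrecPred fun a : ℕ × ℕ × ℕ => R a.1 a.2.1 a.2.2)
    (hsound : ∀ n w, (∀ z, R n w z) → (w.unpair.1 = 1 ∧ n ∈ X ∨ w.unpair.1 = 0 ∧ n ∉ X))
    (hcomplete : ∀ n, ∃ w, ∀ z, R n w z) : Delta2 X := by
  classical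
  have h0 : PrimrecPred fun p : ℕ × ℕ => ¬ R p.1.unpair.1.unpair.1 p.1.unpair.1.unpair.2 p.2 :=
    (PrimrecPred.comp (p := fun a : ℕ × ℕ × ℕ => R a.1 a.2.1 a.2.2) hR
      ((Primrec.unpairFst (Primrec.unpairFst Primrec.fst)).pair
        ((Primrec.unpairSnd (Primrec.unpairFst Primrec.fst)).pair Primrec.snd))).not
  have h1 : Partrec fun n : ℕ =>
      Nat.rfind fun z => Part.some (decide (¬ R n.unpair.1.unpair.1 n.unpair.1.unpair.2 z)) := by
    refine Partrec.rfind (p := fun (n : ℕ) (z : ℕ) =>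
      Part.some (decide (¬ R n.unpair.1.unpair.1 n.unpair.1.unpair.2 z))) ?_
    exact h0.decide.to_comp.partrec
  obtain ⟨ch, hch⟩ := Code.exists_code.1 (Partrec.nat_iff.1 h1)
  let q : ℕ → ℕ := fun m => Encodable.encode (Code.curry ch m)
  have hq : Primrec q :=
    Primrec.encode.comp (Code.primrec₂_curry.comp (Primrec.const ch) Primrec.id)
  have hhalt : ∀ n w, q (Nat.pair n w) ∈ haltingSet ↔ ¬ ∀ z, R n w z := by
    intro n w
    have h : q (Nat.pair n w) ∈ haltingSet ↔
        (Nat.rfind fun z => Part.some (decide (¬ R n w z))).Dom := by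
      simp [haltingSet, q, Code.eval_curry, hch]
    rw [h, rfind_decide_dom, not_forall]
  have h3 := RecIn.rfind (RecIn.comp_primrec (g := chi haltingSet) RecIn.oracle hq)
  have h4 := RecIn.comp (RecIn.left (O := chi haltingSet)) h3
  unfold Delta2 TuringComputes
  refine h4.of_eq fun n => ?_
  have h5 : (Nat.rfind fun w => (fun m => decide (m = 0)) <$> chi haltingSet (q (Nat.pair n w))) =
      Nat.rfind fun w => Part.some (decide (∀ z, R n w z)) := by
    congr 1
    funext w
    simp only [chi, Part.map_eq_map, Part.map_some]
    congr 1
    by_cases h : ∀ z, R n w z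
    · have := (hhalt n w).not.2 (not_not.2 h)
      simp [h, this]
    · have := (hhalt n w).2 h
      simp only [this, if_true]
      simp [h]
  rw [h5]
  have h6 : (Nat.rfind fun w => Part.some (decide (∀ z, R n w z))).Dom :=
    rfind_decide_dom.2 (hcomplete n)
  obtain ⟨w, hw⟩ := Part.dom_iff_mem.1 h6
  rw [Part.eq_some_iff.2 hw]
  have hw' := Nat.rfind_spec hw
  simp only [Part.mem_some_iff] at hw'
  have hw2 : ∀ z, R n w z := by simpa using hw'.symm
  rcases hsound n w hw2 with ⟨h, hn⟩ | ⟨h, hn⟩ <;>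
    exact (Part.bind_some _ _).trans (by simp [chi, hn, h])

end MinimalPair

namespace MinimalPair

theorem mod_two_pow_mod (σ : ℕ) {c d : ℕ} (h : c ≤ d) : σ % 2 ^ d % 2 ^ c = σ % 2 ^ c :=
  Nat.mod_mod_of_dvd _ (pow_dvd_pow 2 h)

theorem exists_uniform_bound {P : ℕ → ℕ → Prop} (S : Finset ℕ)
    (h : ∀ σ ∈ S, ∃ m, ∀ z ≥ m, P z σ) : ∃ m, ∀ z ≥ m, ∀ σ ∈ S, P z σ := by
  have h' : ∀ᶠ z in atTop, ∀ σ ∈ S, P z σ :=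
    (eventually_all_finset S).2 fun σ hσ => eventually_atTop.2 (h σ hσ)
  exact eventually_atTop.1 h'

/-- A set whose initial segments persist through a thin family of strings is `Δ⁰₂`. -/
theorem delta2_of_thin {X : Set ℕ} {Z : ℕ → Prop} {Q : ℕ → ℕ → Prop} {l : ℕ → ℕ}
    (hZ : PrimrecPred Z) (hQ : PrimrecPred fun a : ℕ × ℕ => Q a.1 a.2) (hl : Primrec l) (b : ℕ)
    (hinf : ∀ m, ∃ z ≥ m, Z z) (hcount : ∀ z, Z z → cnt (2 ^ l z) (Q z) ≤ b)
    (hX : ∀ c, ∃ m, ∀ z ≥ m, Z z → ∃ σ < 2 ^ l z, σ % 2 ^ c = seg X c ∧ Q z σ) :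
    Delta2 X := by
  classical
  let P : ℕ → ℕ → ℕ → Prop := fun z c σ => ∃ σ' < 2 ^ l z, σ' % 2 ^ c = σ ∧ Q z σ'
  let good : ℕ → ℕ → Prop := fun c σ => ∃ m, ∀ z ≥ m, Z z → P z c σ
  let G : ℕ → Finset ℕ := fun c => (Finset.range (2 ^ c)).filter (good c)
  have hseg : ∀ c, seg X c ∈ G c := fun c => by
    simp only [G, Finset.mem_filter, Finset.mem_range]
    exact ⟨seg_lt X c, hX c⟩
  have hG : ∀ c, ∃ m, ∀ z ≥ m, ∀ σ ∈ G c, Z z → P z c σ := fun c =>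
    exists_uniform_bound (P := fun z σ => Z z → P z c σ) (G c) fun σ hσ =>
      (Finset.mem_filter.1 hσ).2
  have hGcard : ∀ c, (G c).card ≤ b := by
    intro c
    obtain ⟨m, hm⟩ := hG c
    obtain ⟨z, hz, hZz⟩ := hinf m
    refine le_trans ?_ (hcount z hZz)
    have hsub : G c ⊆ ((Finset.range (2 ^ l z)).filter (Q z)).image (· % 2 ^ c) := by
      intro σ hσ
      obtain ⟨σ', h1, h2, h3⟩ := hm z hz σ hσ hZz
      exact Finset.mem_image.2 ⟨σ', Finset.mem_filter.2 ⟨Finset.mem_range.2 h1, h3⟩, h2⟩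
    refine (Finset.card_le_card hsub).trans (Finset.card_image_le.trans
      (le_of_eq (cnt_eq_card _ _).symm))
  let N : ℕ → ℕ → ℕ := fun c₀ c => ((G c).filter (· % 2 ^ c₀ = seg X c₀)).card
  have hex : ∃ k, ∃ c₀ c₁, ∀ c ≥ c₁, N c₀ c ≤ k :=
    ⟨b, 0, 0, fun c _ => (Finset.card_filter_le _ _).trans (hGcard c)⟩
  let k := Nat.find hex
  obtain ⟨c₀, c₁, hk⟩ : ∃ c₀ c₁, ∀ c ≥ c₁, N c₀ c ≤ k := Nat.find_spec hex
  have hmin : ∀ c₀' c₁', ∃ c ≥ c₁', k ≤ N c₀' c := by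
    intro c₀' c₁'
    by_contra! hcon
    rcases Nat.eq_zero_or_pos k with h0 | h0
    · have := hcon c₁' le_rfl
      omega
    · exact Nat.find_min hex (m := k - 1) (Nat.sub_lt h0 one_pos)
        ⟨c₀', c₁', fun c hc => by have := hcon c hc; omega⟩
  let R : ℕ → ℕ → ℕ → Prop := fun n w z =>
    (c₁ ≤ w.unpair.2.unpair.1 ∧ c₀ ≤ w.unpair.2.unpair.1 ∧ n < w.unpair.2.unpair.1 ∧
      w.unpair.1 ≤ 1) ∧
    k ≤ cnt (2 ^ w.unpair.2.unpair.1)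
      (fun σ => w.unpair.2.unpair.2.unpair.2.testBit σ = true) ∧
    ∀ σ < 2 ^ w.unpair.2.unpair.1, w.unpair.2.unpair.2.unpair.2.testBit σ = true →
      σ % 2 ^ c₀ = seg X c₀ ∧ (σ.testBit n = true ↔ w.unpair.1 = 1) ∧
        (w.unpair.2.unpair.2.unpair.1 ≤ z → Z z → P z w.unpair.2.unpair.1 σ)
  have hR : PrimrecPred fun a : ℕ × ℕ × ℕ => R a.1 a.2.1 a.2.2 := by
    have hQ' : ∀ {f g : ((ℕ × ℕ × ℕ) × ℕ) × ℕ → ℕ}, Primrec f → Primrec g →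
        PrimrecPred fun a => Q (f a) (g a) := fun hf hg =>
      PrimrecPred.comp (p := fun a : ℕ × ℕ => Q a.1 a.2) hQ (hf.pair hg)
    have hZ' : ∀ {f : (ℕ × ℕ × ℕ) × ℕ → ℕ}, Primrec f →
        PrimrecPred fun a => Z (f a) := fun hf => PrimrecPred.comp hZ hf
    have hl' : ∀ {f : (ℕ × ℕ × ℕ) × ℕ → ℕ}, Primrec f →
        Primrec fun a => l (f a) := fun hf => hl.comp hf
    simp only [R, P]
    apply_rules (transparency := .reducible) (maxDepth := 1000) [PrimrecPred.ball,
      PrimrecPred.bex, PrimrecPred.and, PrimrecPred.iff, PrimrecPred.imp, PrimrecPred.le,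
      PrimrecPred.lt, PrimrecPred.nat_eq, PrimrecPred.testBit, Primrec.cnt, Primrec.const,
      Primrec.pow, Primrec.mod, Primrec.unpairFst, Primrec.unpairSnd, Primrec.proj_fst,
      Primrec.proj_snd, Primrec.self]
  refine delta2_of_witness hR ?_ ?_
  · intro n w hw
    obtain ⟨⟨h1, h2, h3, h4⟩, h5, -⟩ := hw 0
    set c := w.unpair.2.unpair.1
    set π := w.unpair.2.unpair.2.unpair.2
    have hsub : (Finset.range (2 ^ c)).filter (fun σ => π.testBit σ = true) ⊆
        (G c).filter (· % 2 ^ c₀ = seg X c₀) := by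
      intro σ hσ
      obtain ⟨hσ1, hσ2⟩ := Finset.mem_filter.1 hσ
      refine Finset.mem_filter.2 ⟨Finset.mem_filter.2 ⟨hσ1, w.unpair.2.unpair.2.unpair.1, ?_⟩, ?_⟩
      · exact fun z hz => ((hw z).2.2 σ (Finset.mem_range.1 hσ1) hσ2).2.2 hz
      · exact ((hw 0).2.2 σ (Finset.mem_range.1 hσ1) hσ2).1
    have heq := Finset.eq_of_subset_of_card_le hsub
      ((hk c h1).trans (h5.trans (le_of_eq (cnt_eq_card _ _))))
    have hmem : seg X c ∈ (Finset.range (2 ^ c)).filter (fun σ => π.testBit σ = true) := by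
      rw [heq]
      exact Finset.mem_filter.2 ⟨hseg c, seg_mod X h2⟩
    obtain ⟨hσ1, hσ2⟩ := Finset.mem_filter.1 hmem
    have h6 := ((hw 0).2.2 _ (Finset.mem_range.1 hσ1) hσ2).2.1
    rw [testBit_seg X h3] at h6
    by_cases hn : n ∈ X
    · exact Or.inl ⟨h6.1 hn, hn⟩
    · have := mt h6.2 hn
      exact Or.inr ⟨by omega, hn⟩
  · intro n
    obtain ⟨c, hc, hkc⟩ := hmin (max c₀ (n + 1)) (max c₁ (max c₀ (n + 1)))
    have hc1 : c₁ ≤ c := le_trans (le_max_left _ _) hc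
    have hcn : max c₀ (n + 1) ≤ c := le_trans (le_max_right _ _) hc
    obtain ⟨m, hm⟩ := hG c
    set S := (G c).filter (· % 2 ^ max c₀ (n + 1) = seg X (max c₀ (n + 1))) with hS
    let π := seg (S : Set ℕ) (2 ^ c)
    have hπ : ∀ σ < 2 ^ c, (π.testBit σ = true ↔ σ ∈ S) := fun σ hσ => testBit_seg _ hσ
    refine ⟨Nat.pair (if n ∈ X then 1 else 0) (Nat.pair c (Nat.pair m π)), fun z => ?_⟩
    simp only [R, Nat.unpair_pair]
    refine ⟨⟨hc1, (le_max_left _ _).trans hcn, (le_max_right _ _).trans hcn, ?_⟩, ?_, ?_⟩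
    · split_ifs <;> simp
    · rw [cnt_eq_card]
      refine hkc.trans (Finset.card_le_card ?_)
      intro σ hσ
      have hσ1 := (Finset.mem_filter.1 (Finset.mem_filter.1 hσ).1).1
      exact Finset.mem_filter.2 ⟨hσ1, (hπ σ (Finset.mem_range.1 hσ1)).2 hσ⟩
    · intro σ hσ hb
      have hσS := (hπ σ hσ).1 hb
      obtain ⟨hσG, hσm⟩ := Finset.mem_filter.1 hσS
      refine ⟨?_, ?_, fun hz => hm z hz σ hσG⟩
      · rw [← mod_two_pow_mod σ (le_max_left c₀ (n + 1)), hσm, seg_mod X (le_max_left _ _)]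
      · have h7 : σ.testBit n = (σ % 2 ^ max c₀ (n + 1)).testBit n := by
          rw [Nat.testBit_mod_two_pow]; simp
        rw [h7, hσm, testBit_seg X (le_max_right c₀ (n + 1))]
        split_ifs with hn <;> simp [hn]

end MinimalPair

namespace MinimalPair

/-! ### Counting -/

/-- A second moment bound: pairwise independent events of probability `x`, each having large
relative overlap with a fixed event that is not too likely, are few in number. -/
theorem second_moment {α ι : Type*} [DecidableEq α] [DecidableEq ι] (D F : Finset α)
    (I : Finset ι) (A : ι → Finset α) {x θ μ : ℝ} (hx : 0 < x) (hθ : 0 ≤ θ) (hμ : 0 ≤ μ)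
    (hD : 0 < D.card) (hsub : ∀ i ∈ I, A i ⊆ D) (hA : ∀ i ∈ I, ((A i).card : ℝ) = x * D.card)
    (hAA : ∀ i ∈ I, ∀ j ∈ I, i ≠ j → ((A i ∩ A j).card : ℝ) = x ^ 2 * D.card)
    (hF : (F.card : ℝ) ≤ μ * D.card)
    (hAF : ∀ i ∈ I, θ * (x * D.card) ≤ ((A i ∩ F).card : ℝ)) :
    I.card * x * (θ ^ 2 - μ) ≤ μ := by
  let g : α → ℝ := fun ω => ∑ i ∈ I, if ω ∈ A i then 1 else 0
  have hcard : ∀ S T : Finset α, ((T ∩ S).card : ℝ) = ∑ ω ∈ S, if ω ∈ T then 1 else 0 := by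
    intro S T
    rw [Finset.sum_boole, Finset.filter_mem_eq_inter, Finset.inter_comm]
  have h1 : I.card * (θ * (x * D.card)) ≤ ∑ ω ∈ F, g ω := by
    rw [Finset.sum_comm, ← nsmul_eq_mul, ← Finset.sum_const]
    refine Finset.sum_le_sum fun i hi => ?_
    rw [← hcard]
    exact hAF i hi
  have h2 : ∑ ω ∈ D, g ω ^ 2 = ∑ i ∈ I, ∑ j ∈ I, ((A i ∩ A j).card : ℝ) := by
    have : ∀ ω, g ω ^ 2 = ∑ i ∈ I, ∑ j ∈ I, if ω ∈ A i ∩ A j then 1 else 0 := by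
      intro ω
      rw [sq, Finset.sum_mul_sum]
      refine Finset.sum_congr rfl fun i _ => Finset.sum_congr rfl fun j _ => ?_
      by_cases h : ω ∈ A i <;> by_cases h' : ω ∈ A j <;> simp [h, h']
    simp_rw [this]
    rw [Finset.sum_comm]
    refine Finset.sum_congr rfl fun i hi => ?_
    rw [Finset.sum_comm]
    refine Finset.sum_congr rfl fun j _ => ?_
    rw [← hcard, Finset.inter_eq_left.2 (Finset.inter_subset_left.trans (hsub i hi))]
  have h3 : ∑ i ∈ I, ∑ j ∈ I, ((A i ∩ A j).card : ℝ) ≤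
      I.card * (x * D.card + I.card * (x ^ 2 * D.card)) := by
    rw [← nsmul_eq_mul I.card (x * _ + _), ← Finset.sum_const]
    refine Finset.sum_le_sum fun i hi => ?_
    have : ∀ j ∈ I, ((A i ∩ A j).card : ℝ) ≤
        (if i = j then x * D.card else 0) + x ^ 2 * D.card := by
      intro j hj
      split_ifs with h
      · subst h
        rw [Finset.inter_self, hA i hi]
        have : 0 ≤ x ^ 2 * (D.card : ℝ) := by positivity
        linarith
      · rw [hAA i hi j hj h, zero_add]
    refine (Finset.sum_le_sum this).trans (le_of_eq ?_)
    rw [Finset.sum_add_distrib, Finset.sum_ite_eq, if_pos hi, Finset.sum_const, nsmul_eq_mul]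
  have h4 : (∑ ω ∈ F ∩ D, g ω) ^ 2 ≤ (F ∩ D).card * ∑ ω ∈ F ∩ D, g ω ^ 2 :=
    sq_sum_le_card_mul_sum_sq
  have h5 : ∑ ω ∈ F ∩ D, g ω = ∑ ω ∈ F, g ω := by
    refine Finset.sum_subset Finset.inter_subset_left fun ω hω hω' => ?_
    refine Finset.sum_eq_zero fun i hi => if_neg fun h => hω' ?_
    exact Finset.mem_inter.2 ⟨hω, hsub i hi h⟩
  have h6 : ∑ ω ∈ F ∩ D, g ω ^ 2 ≤ ∑ ω ∈ D, g ω ^ 2 :=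
    Finset.sum_le_sum_of_subset_of_nonneg Finset.inter_subset_right fun _ _ _ => sq_nonneg _
  have h7 : ((F ∩ D).card : ℝ) ≤ μ * D.card :=
    le_trans (by exact_mod_cast Finset.card_le_card Finset.inter_subset_left) hF
  have hd : (0 : ℝ) < D.card := by exact_mod_cast hD
  set d : ℝ := (D.card : ℝ)
  set N : ℝ := (I.card : ℝ)
  have hN : 0 ≤ N := by positivity
  have h8 : (N * (θ * (x * d))) ^ 2 ≤ μ * d * (N * (x * d + N * (x ^ 2 * d))) := by
    calc (N * (θ * (x * d))) ^ 2 ≤ (∑ ω ∈ F, g ω) ^ 2 := by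
          gcongr
      _ ≤ _ := by
          rw [← h5]
          refine h4.trans (mul_le_mul h7 (h6.trans (h2.trans_le h3)) ?_ (by positivity))
          exact Finset.sum_nonneg fun _ _ => sq_nonneg _
  rcases hN.eq_or_lt with h0 | h0
  · rw [← h0]
    simpa using hμ
  · have h9 : N * x * d ^ 2 * (N * x * (θ ^ 2 - μ)) ≤ N * x * d ^ 2 * μ := by
      nlinarith [h8]
    exact le_of_mul_le_mul_left h9 (by positivity)

open Classical in
/-- The numbers below `2 ^ k` whose binary digits in `Q` vanish. -/
noncomputable def zeroSet (k : ℕ) (Q : Finset ℕ) : Finset ℕ :=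
  (Finset.range (2 ^ k)).filter fun x => ∀ i ∈ Q, ¬ x.testBit i = true

theorem mem_zeroSet {k : ℕ} {Q : Finset ℕ} {x : ℕ} :
    x ∈ zeroSet k Q ↔ x < 2 ^ k ∧ ∀ i ∈ Q, ¬ x.testBit i = true := by
  simp [zeroSet]

theorem zeroSet_inter (k : ℕ) (Q Q' : Finset ℕ) :
    zeroSet k Q ∩ zeroSet k Q' = zeroSet k (Q ∪ Q') := by
  ext x
  simp only [Finset.mem_inter, mem_zeroSet, Finset.mem_union]
  constructor
  · rintro ⟨⟨h, h1⟩, -, h2⟩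
    exact ⟨h, fun i hi => hi.elim (h1 i) (h2 i)⟩
  · rintro ⟨h, h1⟩
    exact ⟨⟨h, fun i hi => h1 i (Or.inl hi)⟩, h, fun i hi => h1 i (Or.inr hi)⟩

theorem zeroSet_subset (k : ℕ) {Q Q' : Finset ℕ} (h : Q ⊆ Q') : zeroSet k Q' ⊆ zeroSet k Q := by
  intro x
  rw [mem_zeroSet, mem_zeroSet]
  exact fun hx => ⟨hx.1, fun i hi => hx.2 i (h hi)⟩

theorem card_zeroSet_mul {k : ℕ} {Q : Finset ℕ} (hQ : ∀ i ∈ Q, i < k) :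
    (zeroSet k Q).card * 2 ^ Q.card = 2 ^ k := by
  classical
  induction Q using Finset.induction_on with
  | empty => simp [zeroSet]
  | insert i Q hi ih =>
    have hik : i < k := hQ i (Finset.mem_insert_self i Q)
    rw [Finset.card_insert_of_notMem hi, pow_succ,
      ← ih fun j hj => hQ j (Finset.mem_insert_of_mem hj)]
    have h1 : zeroSet k (insert i Q) = (zeroSet k Q).filter fun x => ¬ x.testBit i = true := by
      ext x
      simp only [mem_zeroSet, Finset.mem_filter, Finset.forall_mem_insert]
      tauto
    have h2 : ((zeroSet k Q).filter fun x => x.testBit i = true).card =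
        ((zeroSet k Q).filter fun x => ¬ x.testBit i = true).card := by
      have key : ∀ x ∈ zeroSet k Q, x ^^^ 2 ^ i ∈ zeroSet k Q := by
        intro x hx
        rw [mem_zeroSet] at hx ⊢
        refine ⟨Nat.xor_lt_two_pow hx.1 (Nat.pow_lt_pow_right one_lt_two hik), fun j hj => ?_⟩
        have hij : i ≠ j := fun h => hi (h ▸ hj)
        have := hx.2 j hj
        simpa [Nat.testBit_xor, Nat.testBit_two_pow, hij] using this
      refine Finset.card_nbij' (· ^^^ 2 ^ i) (· ^^^ 2 ^ i) ?_ ?_ ?_ ?_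
      · intro x hx
        have hx := Finset.mem_filter.1 hx
        refine Finset.mem_coe.2 (Finset.mem_filter.2 ⟨key x hx.1, ?_⟩)
        simp [Nat.testBit_xor, hx.2]
      · intro x hx
        have hx := Finset.mem_filter.1 hx
        refine Finset.mem_coe.2 (Finset.mem_filter.2 ⟨key x hx.1, ?_⟩)
        simpa [Nat.testBit_xor] using hx.2
      · intro x _
        simp
      · intro x _
        simp
    have h3 := Finset.card_filter_add_card_filter_not (s := zeroSet k Q)
      (fun x => x.testBit i = true)
    rw [h1, ← h3, h2]
    ring

theorem card_zeroSet {k : ℕ} {Q : Finset ℕ} (hQ : ∀ i ∈ Q, i < k) :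
    ((zeroSet k Q).card : ℝ) = (1 / 2) ^ Q.card * 2 ^ k := by
  have h : ((zeroSet k Q).card : ℝ) * 2 ^ Q.card = 2 ^ k := by
    exact_mod_cast card_zeroSet_mul hQ
  rw [← h, mul_comm, mul_assoc, ← mul_pow]
  norm_num

/-- The binary digits used by `σ` on side `s` at scale `u`. -/
def bits (s u k σ : ℕ) : Finset ℕ := (Finset.range (u + 1)).image (bitIdx (lev k) s σ)

theorem mem_zeroSet_bits {s u k σ x : ℕ} :
    x ∈ zeroSet k (bits s u k σ) ↔ x < 2 ^ k ∧ Omit s u k x σ := by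
  simp [mem_zeroSet, bits, Omit]

theorem four_pow_lev {k : ℕ} (hk : 4 ≤ k) : 4 ^ (lev k + 1) ≤ k :=
  Nat.findGreatest_spec (P := fun l => 4 ^ (l + 1) ≤ k) (Nat.zero_le k) (by simpa using hk)

theorem le_lev {k l : ℕ} (h : 4 ^ (l + 1) ≤ k) : l ≤ lev k := by
  refine Nat.le_findGreatest (P := fun l => 4 ^ (l + 1) ≤ k) (le_trans ?_ h) h
  exact (Nat.le_succ l).trans (Nat.lt_pow_self (by norm_num)).le

theorem bitIdx_lt {s σ i k : ℕ} (hk : 4 ≤ k) (hs : s ≤ 1) (hσ : σ < 2 ^ lev k) (hi : i ≤ lev k) :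
    bitIdx (lev k) s σ i < k := by
  have h1 := four_pow_lev hk
  set l := lev k
  have h2 : l + 1 ≤ 2 ^ l := Nat.lt_two_pow_self
  have h3 : (σ + 1) * (l + 1) ≤ 2 ^ l * 2 ^ l := Nat.mul_le_mul hσ h2
  have h4 : 4 ^ (l + 1) = 4 * (2 ^ l * 2 ^ l) := by
    rw [pow_succ, ← mul_pow]; norm_num [mul_comm]
  unfold bitIdx
  have h5 : (σ + 1) * (l + 1) = σ * (l + 1) + (l + 1) := by ring
  omega

theorem bitIdx_inj {l s σ i s' σ' i' : ℕ} (hs : s ≤ 1) (hs' : s' ≤ 1) (hi : i ≤ l) (hi' : i' ≤ l)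
    (h : bitIdx l s σ i = bitIdx l s' σ' i') : s = s' ∧ σ = σ' ∧ i = i' := by
  unfold bitIdx at h
  have h1 : s = s' := by omega
  have h2 : σ * (l + 1) + i = σ' * (l + 1) + i' := by omega
  have h3 : ∀ a b : ℕ, b ≤ l →
      (a * (l + 1) + b) / (l + 1) = a ∧ (a * (l + 1) + b) % (l + 1) = b := by
    intro a b hb
    constructor
    · rw [mul_comm, Nat.mul_add_div (Nat.succ_pos l), Nat.div_eq_of_lt (by omega), add_zero]
    · rw [mul_comm, Nat.mul_add_mod, Nat.mod_eq_of_lt (by omega)]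
  have h4 := h3 σ i hi
  rw [h2] at h4
  have h5 := h3 σ' i' hi'
  exact ⟨h1, h4.1.symm.trans h5.1, h4.2.symm.trans h5.2⟩

theorem bits_lt {s u k σ : ℕ} (hk : 4 ≤ k) (hs : s ≤ 1) (hσ : σ < 2 ^ lev k) (hu : u ≤ lev k) :
    ∀ i ∈ bits s u k σ, i < k := by
  intro i hi
  obtain ⟨j, hj, rfl⟩ := Finset.mem_image.1 hi
  exact bitIdx_lt hk hs hσ (by have := Finset.mem_range.1 hj; omega)

theorem card_bits {s u k σ : ℕ} (hs : s ≤ 1) (hu : u ≤ lev k) : (bits s u k σ).card = u + 1 := by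
  unfold bits
  rw [Finset.card_image_of_injOn, Finset.card_range]
  intro i hi j hj h
  simp only [Finset.coe_range, Set.mem_Iio] at hi hj
  exact (bitIdx_inj hs hs (by omega) (by omega) h).2.2

theorem disjoint_bits {s u s' u' k σ σ' : ℕ} (hs : s ≤ 1) (hs' : s' ≤ 1) (hu : u ≤ lev k)
    (hu' : u' ≤ lev k) (h : s ≠ s' ∨ σ ≠ σ') : Disjoint (bits s u k σ) (bits s' u' k σ') := by
  rw [Finset.disjoint_left]
  intro i hi hi'
  obtain ⟨j, hj, rfl⟩ := Finset.mem_image.1 hi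
  obtain ⟨j', hj', h'⟩ := Finset.mem_image.1 hi'
  simp only [Finset.mem_range] at hj hj'
  have := bitIdx_inj hs' hs (by omega) (by omega) h'
  omega

end MinimalPair

namespace MinimalPair

theorem card_le_of_zeroSet {ι : Type*} [DecidableEq ι] {k n : ℕ} {Q₀ : Finset ℕ} {I : Finset ι}
    {Q : ι → Finset ℕ} {F : Finset ℕ} {θ μ : ℝ} (hθ : 0 ≤ θ) (hμ : 0 ≤ μ)
    (hQ₀ : ∀ i ∈ Q₀, i < k) (hQ : ∀ j ∈ I, ∀ i ∈ Q j, i < k) (hn : ∀ j ∈ I, (Q j).card = n)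
    (hd₀ : ∀ j ∈ I, Disjoint Q₀ (Q j)) (hd : ∀ i ∈ I, ∀ j ∈ I, i ≠ j → Disjoint (Q i) (Q j))
    (hF : (F.card : ℝ) ≤ μ * (zeroSet k Q₀).card)
    (hQF : ∀ j ∈ I, θ * (zeroSet k (Q₀ ∪ Q j)).card ≤ ((zeroSet k (Q₀ ∪ Q j) ∩ F).card : ℝ)) :
    I.card * (θ ^ 2 - μ) ≤ μ * 2 ^ n := by
  have hlt : ∀ j ∈ I, ∀ i ∈ Q₀ ∪ Q j, i < k := fun j hj i hi =>
    (Finset.mem_union.1 hi).elim (hQ₀ i) (hQ j hj i)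
  have hA : ∀ j ∈ I, ((zeroSet k (Q₀ ∪ Q j)).card : ℝ) = (1 / 2) ^ n * (zeroSet k Q₀).card := by
    intro j hj
    rw [card_zeroSet (hlt j hj), card_zeroSet hQ₀, Finset.card_union_of_disjoint (hd₀ j hj),
      hn j hj]
    ring
  have h := second_moment (zeroSet k Q₀) F I (fun j => zeroSet k (Q₀ ∪ Q j))
    (x := (1 / 2) ^ n) (by positivity) hθ hμ ?_ ?_ hA ?_ hF ?_
  · have h2 : (0 : ℝ) < 2 ^ n := by positivity
    have h3 : (1 / 2 : ℝ) ^ n * 2 ^ n = 1 := by rw [← mul_pow]; norm_num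
    calc I.card * (θ ^ 2 - μ) = (I.card * (1 / 2) ^ n * (θ ^ 2 - μ)) * 2 ^ n := by
          linear_combination -(I.card * (θ ^ 2 - μ)) * h3
      _ ≤ μ * 2 ^ n := by gcongr
  · exact Nat.pos_of_ne_zero fun h0 => by
      have := card_zeroSet_mul hQ₀
      rw [h0, zero_mul] at this
      exact absurd this.symm (by positivity)
  · exact fun j _ => zeroSet_subset k Finset.subset_union_left
  · intro i hi j hj hij
    have hu : Q₀ ∪ Q i ∪ (Q₀ ∪ Q j) = Q₀ ∪ (Q i ∪ Q j) := by
      ext; simp only [Finset.mem_union]; tauto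
    rw [zeroSet_inter, hu, card_zeroSet, card_zeroSet hQ₀, Finset.card_union_of_disjoint,
      Finset.card_union_of_disjoint (hd i hi j hj hij), hn i hi, hn j hj]
    · ring
    · exact Finset.disjoint_union_right.2 ⟨hd₀ i hi, hd₀ j hj⟩
    · intro a ha
      rcases Finset.mem_union.1 ha with ha | ha
      · exact hQ₀ a ha
      · exact (Finset.mem_union.1 ha).elim (hQ i hi a) (hQ j hj a)
  · intro j hj
    rw [← hA j hj]
    exact hQF j hj

variable {s r z u v : ℕ}

theorem Valid.four_le (hz : Valid r z) : 4 ≤ z.unpair.1 := hz.1.1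

open Classical in
theorem card_not_got_le (hz : Valid r z) :
    (((Finset.range (2 ^ z.unpair.1)).filter fun x => ¬ Got r z x).card : ℝ) ≤
      1 / 2 * (zeroSet z.unpair.1 ∅).card := by
  have h1 := hz.2.1
  unfold Resp at h1
  rw [cnt_eq_card] at h1
  have h2 := Finset.card_filter_add_card_filter_not (s := Finset.range (2 ^ z.unpair.1)) (Got r z)
  rw [Finset.card_range] at h2
  have h3 : 2 * ((Finset.range (2 ^ z.unpair.1)).filter fun x => ¬ Got r z x).card ≤
      2 ^ z.unpair.1 := by
    change 2 ^ z.unpair.1 ≤ 2 * ((Finset.range (2 ^ z.unpair.1)).filter (Got r z)).card at h1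
    omega
  have h5 : (zeroSet z.unpair.1 ∅).card = 2 ^ z.unpair.1 := by simp [zeroSet]
  rw [h5]
  have h6 : (2 : ℝ) * ((Finset.range (2 ^ z.unpair.1)).filter fun x => ¬ Got r z x).card ≤
      (2 ^ z.unpair.1 : ℕ) := by
    exact_mod_cast h3
  linarith

theorem cnt_safe_le (hs : s ≤ 1) (hz : Valid r z) (hu : u ≤ levz z) :
    cnt (2 ^ levz z) (Safe s r z u) ≤ 8 * 2 ^ (u + 1) := by
  classical
  set k := z.unpair.1 with hk
  have h4 : 4 ≤ k := hz.four_le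
  rw [cnt_eq_card]
  set I := (Finset.range (2 ^ levz z)).filter (Safe s r z u)
  have hI : ∀ σ ∈ I, σ < 2 ^ lev k ∧ Safe s r z u σ := fun σ hσ =>
    ⟨Finset.mem_range.1 (Finset.mem_filter.1 hσ).1, (Finset.mem_filter.1 hσ).2⟩
  have h := card_le_of_zeroSet (k := k) (n := u + 1) (Q₀ := ∅) (I := I)
    (Q := fun σ => bits s u k σ) (F := (Finset.range (2 ^ k)).filter fun x => ¬ Got r z x)
    (θ := 3 / 4) (μ := 1 / 2) (by norm_num) (by norm_num) (by simp)
    (fun σ hσ => bits_lt h4 hs (hI σ hσ).1 hu) (fun σ _ => card_bits hs hu) (by simp)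
    (fun σ _ τ _ h => disjoint_bits hs hs hu hu (Or.inr h)) ?_ ?_
  · have h' : (I.card : ℝ) ≤ 8 * 2 ^ (u + 1) := by linarith
    exact_mod_cast h'
  · exact card_not_got_le hz
  · intro σ hσ
    rw [Finset.empty_union]
    have h1 := (hI σ hσ).2
    unfold Safe at h1
    have h2 := card_zeroSet_mul (bits_lt h4 hs (hI σ hσ).1 hu)
    rw [card_bits hs hu] at h2
    have h3 : cnt (2 ^ k) (fun x => ¬ Got r z x ∧ Omit s u k x σ) =
        (zeroSet k (bits s u k σ) ∩
          (Finset.range (2 ^ k)).filter fun x => ¬ Got r z x).card := by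
      rw [cnt_eq_card]
      congr 1
      ext x
      simp only [Finset.mem_filter, Finset.mem_inter, mem_zeroSet_bits, Finset.mem_range]
      tauto
    rw [← hk, h3] at h1
    have h4 : 3 * (zeroSet k (bits s u k σ)).card ≤ 4 * (zeroSet k (bits s u k σ) ∩
          (Finset.range (2 ^ k)).filter fun x => ¬ Got r z x).card := by
      refine Nat.le_of_mul_le_mul_right ?_ (pow_pos two_pos (u + 1))
      linarith
    have h5 : (3 : ℝ) * (zeroSet k (bits s u k σ)).card ≤ 4 * (zeroSet k (bits s u k σ) ∩
          (Finset.range (2 ^ k)).filter fun x => ¬ Got r z x).card := by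
      exact_mod_cast h4
    linarith

theorem cnt_not_hit_le (hs : s ≤ 1) (hz : Valid r z) (hu : u ≤ levz z) (hv : v ≤ levz z)
    {τ : ℕ} (hτ : τ < 2 ^ levz z) (hτs : ¬ Safe (1 - s) r z v τ) :
    cnt (2 ^ levz z) (fun σ => ¬ Hit s r z u v σ τ) ≤ 3 * 2 ^ (u + 1) := by
  classical
  set k := z.unpair.1 with hk
  have h4 : 4 ≤ k := hz.four_le
  have hs' : 1 - s ≤ 1 := Nat.sub_le _ _
  have hne : s ≠ 1 - s := by omega
  rw [cnt_eq_card]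
  set I := (Finset.range (2 ^ levz z)).filter fun σ => ¬ Hit s r z u v σ τ
  have hI : ∀ σ ∈ I, σ < 2 ^ lev k ∧ ¬ Hit s r z u v σ τ := fun σ hσ =>
    ⟨Finset.mem_range.1 (Finset.mem_filter.1 hσ).1, (Finset.mem_filter.1 hσ).2⟩
  have h := card_le_of_zeroSet (k := k) (n := u + 1) (Q₀ := bits (1 - s) v k τ) (I := I)
    (Q := fun σ => bits s u k σ)
    (F := (Finset.range (2 ^ k)).filter fun x => ¬ Got r z x ∧ Omit (1 - s) v k x τ)
    (θ := 1) (μ := 3 / 4) (by norm_num) (by norm_num) (bits_lt h4 hs' hτ hv)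
    (fun σ hσ => bits_lt h4 hs (hI σ hσ).1 hu) (fun σ _ => card_bits hs hu)
    (fun σ _ => disjoint_bits hs' hs hv hu (Or.inl hne.symm))
    (fun σ _ τ _ h => disjoint_bits hs hs hu hu (Or.inr h)) ?_ ?_
  · have h' : (I.card : ℝ) ≤ 3 * 2 ^ (u + 1) := by linarith
    exact_mod_cast h'
  · have h2 := card_zeroSet_mul (bits_lt h4 hs' hτ hv)
    rw [card_bits hs' hv] at h2
    unfold Safe at hτs
    rw [← hk, cnt_eq_card] at hτs
    have h3 : 4 * ((Finset.range (2 ^ k)).filter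
        fun x => ¬ Got r z x ∧ Omit (1 - s) v k x τ).card ≤
          3 * (zeroSet k (bits (1 - s) v k τ)).card := by
      refine Nat.le_of_mul_le_mul_right ?_ (pow_pos two_pos (v + 1))
      linarith
    have h5 : (4 : ℝ) * ((Finset.range (2 ^ k)).filter
        fun x => ¬ Got r z x ∧ Omit (1 - s) v k x τ).card ≤
          3 * (zeroSet k (bits (1 - s) v k τ)).card := by
      exact_mod_cast h3
    linarith
  · intro σ hσ
    rw [one_mul, Finset.inter_eq_left.2]
    intro x hx
    rw [← zeroSet_inter, Finset.mem_inter, mem_zeroSet_bits, mem_zeroSet_bits] at hx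
    refine Finset.mem_filter.2 ⟨Finset.mem_range.2 hx.1.1, fun hg => ?_, hx.1.2⟩
    exact (hI σ hσ).2 ⟨x, hx.1.1, hg, hx.2.2, hx.1.2⟩

theorem card_matching_le (hs : s ≤ 1) (hz : Valid r z) (hu : u ≤ levz z) (hv : v ≤ levz z)
    {I : Finset ℕ} {g : ℕ → ℕ} (hI : ∀ τ ∈ I, τ < 2 ^ levz z) (hg : ∀ τ ∈ I, g τ < 2 ^ levz z)
    (hinj : ∀ τ ∈ I, ∀ τ' ∈ I, g τ = g τ' → τ = τ')
    (hh : ∀ τ ∈ I, ¬ Hit s r z u v (g τ) τ) : I.card ≤ 2 ^ (u + v + 2) := by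
  classical
  set k := z.unpair.1 with hk
  have h4 : 4 ≤ k := hz.four_le
  have hs' : 1 - s ≤ 1 := Nat.sub_le _ _
  have hne : s ≠ 1 - s := by omega
  have h := card_le_of_zeroSet (k := k) (n := u + v + 2) (Q₀ := ∅) (I := I)
    (Q := fun τ => bits s u k (g τ) ∪ bits (1 - s) v k τ)
    (F := (Finset.range (2 ^ k)).filter fun x => ¬ Got r z x)
    (θ := 1) (μ := 1 / 2) (by norm_num) (by norm_num) (by simp) ?_ ?_ (by simp) ?_ ?_ ?_
  · have h' : (I.card : ℝ) ≤ 2 ^ (u + v + 2) := by linarith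
    exact_mod_cast h'
  · intro τ hτ i hi
    rcases Finset.mem_union.1 hi with hi | hi
    · exact bits_lt h4 hs (hg τ hτ) hu i hi
    · exact bits_lt h4 hs' (hI τ hτ) hv i hi
  · intro τ hτ
    rw [Finset.card_union_of_disjoint (disjoint_bits hs hs' hu hv (Or.inl hne)), card_bits hs hu,
      card_bits hs' hv]
    ring
  · intro τ hτ τ' hτ' h
    have h' : g τ ≠ g τ' := fun h' => h (hinj τ hτ τ' hτ' h')
    rw [Finset.disjoint_union_left, Finset.disjoint_union_right, Finset.disjoint_union_right]
    exact ⟨⟨disjoint_bits hs hs hu hu (Or.inr h'), disjoint_bits hs hs' hu hv (Or.inl hne)⟩,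
      disjoint_bits hs' hs hv hu (Or.inl hne.symm), disjoint_bits hs' hs' hv hv (Or.inr h)⟩
  · exact card_not_got_le hz
  · intro τ hτ
    rw [one_mul, Finset.empty_union, Finset.inter_eq_left.2]
    intro x hx
    rw [← zeroSet_inter, Finset.mem_inter, mem_zeroSet_bits, mem_zeroSet_bits] at hx
    refine Finset.mem_filter.2 ⟨Finset.mem_range.2 hx.1.1, fun hg => ?_⟩
    exact hh τ hτ ⟨x, hx.1.1, hg, hx.1.2, hx.2.2⟩

theorem cnt_exists_not_hit_le (hs : s ≤ 1) (hu : u ≤ levz z) (hv : v ≤ levz z) {d τ : ℕ}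
    (h : NoSafe (1 - s) r z d τ v) :
    cnt (2 ^ levz z) (fun σ' => ∃ τ' < 2 ^ levz z, τ' % 2 ^ d = τ ∧ ¬ Hit s r z u v σ' τ') ≤
      3 * 2 ^ (u + 1) * 2 ^ (u + v + 2) := by
  classical
  obtain ⟨hz, -, hns⟩ := h
  rw [cnt_eq_card]
  set S := (Finset.range (2 ^ levz z)).filter fun σ' =>
    ∃ τ' < 2 ^ levz z, τ' % 2 ^ d = τ ∧ ¬ Hit s r z u v σ' τ'
  have hS : ∀ σ ∈ S, σ < 2 ^ levz z ∧
      ∃ τ' < 2 ^ levz z, τ' % 2 ^ d = τ ∧ ¬ Hit s r z u v σ τ' := fun σ hσ =>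
    ⟨Finset.mem_range.1 (Finset.mem_filter.1 hσ).1, (Finset.mem_filter.1 hσ).2⟩
  have hch : ∀ σ, ∃ τ', σ ∈ S → τ' < 2 ^ levz z ∧ τ' % 2 ^ d = τ ∧ ¬ Hit s r z u v σ τ' := by
    intro σ
    by_cases hσ : σ ∈ S
    · obtain ⟨τ', h⟩ := (hS σ hσ).2
      exact ⟨τ', fun _ => h⟩
    · exact ⟨0, fun h => absurd h hσ⟩
  choose f hf using hch
  have h1 := Finset.card_le_mul_card_image (f := f) S (3 * 2 ^ (u + 1)) (fun τ' hτ' => by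
    obtain ⟨σ, hσ, rfl⟩ := Finset.mem_image.1 hτ'
    refine le_trans ?_ (cnt_not_hit_le (s := s) (r := r) (z := z) hs hz hu hv (hf σ hσ).1
      (hns _ (hf σ hσ).1 (hf σ hσ).2.1))
    rw [cnt_eq_card]
    refine Finset.card_le_card fun σ' hσ' => ?_
    obtain ⟨h1, h2⟩ := Finset.mem_filter.1 hσ'
    refine Finset.mem_filter.2 ⟨Finset.mem_range.2 (hS σ' h1).1, ?_⟩
    rw [← h2]
    exact (hf σ' h1).2.2)
  refine h1.trans (Nat.mul_le_mul_left _ ?_)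
  have hg : ∀ τ', ∃ σ, τ' ∈ S.image f → σ ∈ S ∧ f σ = τ' := by
    intro τ'
    by_cases h : τ' ∈ S.image f
    · obtain ⟨σ, h⟩ := Finset.mem_image.1 h
      exact ⟨σ, fun _ => h⟩
    · exact ⟨0, fun h' => absurd h' h⟩
  choose g hg using hg
  refine card_matching_le (s := s) (r := r) (z := z) (g := g) hs hz hu hv ?_ ?_ ?_ ?_
  · intro τ' hτ'
    have := hg τ' hτ'
    rw [← this.2]
    exact (hf _ this.1).1
  · exact fun τ' hτ' => (hS _ (hg τ' hτ').1).1
  · intro τ₁ h₁ τ₂ h₂ h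
    rw [← (hg τ₁ h₁).2, ← (hg τ₂ h₂).2, h]
  · intro τ' hτ'
    have := hg τ' hτ'
    have h2 := (hf _ this.1).2.2
    rwa [this.2] at h2

end MinimalPair

namespace MinimalPair

variable {s r u v : ℕ}

theorem eventually_of_subsingleton {P : ℕ → Prop} (h : ∀ a b, a < b → P a → ¬ P b) :
    ∀ᶠ a in atTop, ¬ P a := by
  by_cases hP : ∃ a, P a
  · obtain ⟨a, ha⟩ := hP
    filter_upwards [eventually_gt_atTop a] with b hb
    exact h a b hb ha
  · exact Eventually.of_forall fun a ha => hP ⟨a, ha⟩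

theorem Valid.eq_of_fst_eq {z z' : ℕ} (hz : Valid r z) (hz' : Valid r z')
    (h : z.unpair.1 = z'.unpair.1) : z = z' := by
  have h2 : z.unpair.2 = z'.unpair.2 := by
    rcases lt_trichotomy z.unpair.2 z'.unpair.2 with hlt | heq | hlt
    · exact absurd (h ▸ hz.2.1) (hz'.2.2 _ hlt)
    · exact heq
    · exact absurd (h.symm ▸ hz'.2.1) (hz.2.2 _ hlt)
  rw [← Nat.pair_unpair z, ← Nat.pair_unpair z', h, h2]

theorem eventually_le_levz (r L : ℕ) : ∀ᶠ z in atTop, Valid r z → L ≤ levz z := by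
  have h : ∀ᶠ z in atTop, ∀ k ∈ Finset.range (4 ^ (L + 1)), ¬ (Valid r z ∧ z.unpair.1 = k) :=
    (eventually_all_finset _).2 fun k _ => eventually_of_subsingleton fun a b hab ha hb =>
      hab.ne (ha.1.eq_of_fst_eq hb.1 (ha.2.trans hb.2.symm))
  filter_upwards [h] with z hz hv
  refine le_lev ?_
  by_contra! hlt
  exact hz _ (Finset.mem_range.2 hlt) ⟨hv, rfl⟩

theorem NoSafe.extend {X : Set ℕ} {z c c' : ℕ} (h : NoSafe s r z c (seg X c) u) (hc : c ≤ c')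
    (hz : c' ≤ levz z) : NoSafe s r z c' (seg X c') u :=
  ⟨h.1, hz, fun σ hσ hσc => h.2.2 σ hσ (by rw [← mod_two_pow_mod σ hc, hσc, seg_mod X hc])⟩

theorem AllHit.extend_left {X : Set ℕ} {z c c' d τ : ℕ} (h : AllHit s r z c (seg X c) d τ u v)
    (hc : c ≤ c') (hz : c' ≤ levz z) : AllHit s r z c' (seg X c') d τ u v :=
  ⟨h.1, hz, fun σ hσ hσc => h.2.2 σ hσ (by rw [← mod_two_pow_mod σ hc, hσc, seg_mod X hc])⟩

theorem AllHit.extend_right {X : Set ℕ} {z c σ d d' : ℕ} (h : AllHit s r z c σ d (seg X d) u v)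
    (hd : d ≤ d') : AllHit s r z c σ d' (seg X d') u v :=
  ⟨h.1, h.2.1, fun σ' h1 h2 τ h3 h4 =>
    h.2.2 σ' h1 h2 τ h3 (by rw [← mod_two_pow_mod τ hd, h4, seg_mod X hd])⟩

theorem Hit.swap (hs : s ≤ 1) {z σ τ : ℕ} (h : Hit s r z u v σ τ) : Hit (1 - s) r z v u τ σ := by
  obtain ⟨x, hx, hg, h1, h2⟩ := h
  refine ⟨x, hx, hg, h2, ?_⟩
  rwa [show 1 - (1 - s) = s by omega]

theorem AllHit.swap (hs : s ≤ 1) {z c σ τ : ℕ} (h : AllHit s r z c σ c τ u v) :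
    AllHit (1 - s) r z c τ c σ v u :=
  ⟨h.1, h.2.1, fun τ' h1 h2 σ' h3 h4 => (h.2.2 σ' h3 h4 τ' h1 h2).swap hs⟩

/-- The string `σ` of length `c` looks large enough at all stages. -/
def Big (s r c σ u : ℕ) : Prop := ∀ m, ∃ t, Bg s r m t c σ u

/-- The guess `(c, τ, v)` chooses `z`. -/
def Kept (s r c σ u τ v z : ℕ) : Prop := ∀ S, ¬ NotKept s r c σ u τ v z S

section Infinite

variable {X : Set ℕ}

theorem eventually_frequently_noSafe (hs : s ≤ 1) (hX : ¬ Delta2 X) (hr : ∃ᶠ z in atTop, Valid r z)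
    (u : ℕ) : ∀ᶠ c in atTop, ∃ᶠ z in atTop, NoSafe s r z c (seg X c) u := by
  have key : ∃ c, ∃ᶠ z in atTop, NoSafe s r z c (seg X c) u := by
    by_contra! hcon
    refine hX (delta2_of_thin (Z := fun z => Valid r z ∧ u ≤ levz z)
      (Q := fun z σ => Safe s r z u σ)
      (l := levz) ?_ ?_ (levz_primrec Primrec.self) (8 * 2 ^ (u + 1)) ?_ ?_ ?_)
    · exact (valid_primrec (.const r) .self).and (.le (.const u) (levz_primrec .self))
    · exact safe_primrec (.const s) (.const r) .fst (.const u) .snd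
    · intro m
      exact frequently_atTop.1 ((hr.and_eventually (eventually_le_levz r u)).mono
        fun z hz => ⟨hz.1, hz.2 hz.1⟩) m
    · exact fun z hz => cnt_safe_le hs hz.1 hz.2
    · intro c
      obtain ⟨m, hm⟩ := eventually_atTop.1
        ((hcon c).and (eventually_le_levz r c))
      refine ⟨m, fun z hz hv => ?_⟩
      obtain ⟨h1, h2⟩ := hm z hz
      by_contra! h
      exact h1 ⟨hv.1, h2 hv.1, h⟩
  obtain ⟨c, hc⟩ := key
  filter_upwards [eventually_ge_atTop c] with c' hc'
  exact (hc.and_eventually (eventually_le_levz r c')).mono fun z hz =>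
    hz.1.extend hc' (hz.2 hz.1.1)

theorem eventually_frequently_allHit (hs : s ≤ 1) (hX : ¬ Delta2 X) {d τ : ℕ} (u : ℕ)
    (h : ∃ᶠ z in atTop, NoSafe (1 - s) r z d τ v) :
    ∀ᶠ c in atTop, ∃ᶠ z in atTop, AllHit s r z c (seg X c) d τ u v := by
  have key : ∃ c, ∃ᶠ z in atTop, AllHit s r z c (seg X c) d τ u v := by
    by_contra! hcon
    refine hX (delta2_of_thin
      (Z := fun z => NoSafe (1 - s) r z d τ v ∧ u ≤ levz z ∧ v ≤ levz z)
      (Q := fun z σ' => ∃ τ' < 2 ^ levz z, τ' % 2 ^ d = τ ∧ ¬ Hit s r z u v σ' τ')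
      (l := levz) ?_ ?_ (levz_primrec Primrec.self) (3 * 2 ^ (u + 1) * 2 ^ (u + v + 2)) ?_ ?_ ?_)
    · exact (noSafe_primrec (.const _) (.const r) .self (.const d) (.const τ) (.const v)).and
        ((PrimrecPred.le (.const u) (levz_primrec .self)).and
          (PrimrecPred.le (.const v) (levz_primrec .self)))
    · refine PrimrecPred.bex (.pow (.const 2) (levz_primrec .fst)) (PrimrecPred.and ?_ ?_)
      · exact .nat_eq (.mod .snd (.const _)) (.const τ)
      · exact (hit_primrec (.const s) (.const r) (.proj_fst .fst) (.const u) (.const v)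
          (.proj_snd .fst) .snd).not
    · intro m
      exact frequently_atTop.1 ((h.and_eventually ((eventually_le_levz r u).and
        (eventually_le_levz r v))).mono fun z hz => ⟨hz.1, hz.2.1 hz.1.1, hz.2.2 hz.1.1⟩) m
    · exact fun z hz => cnt_exists_not_hit_le hs hz.2.1 hz.2.2 hz.1
    · intro c
      obtain ⟨m, hm⟩ := eventually_atTop.1
        ((hcon c).and (eventually_le_levz r c))
      refine ⟨m, fun z hz hv => ?_⟩
      obtain ⟨h1, h2⟩ := hm z hz
      by_contra! h
      exact h1 ⟨hv.1.1, h2 hv.1.1, h⟩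
  obtain ⟨c, hc⟩ := key
  filter_upwards [eventually_ge_atTop c] with c' hc'
  exact (hc.and_eventually (eventually_le_levz r c')).mono fun z hz =>
    hz.1.extend_left hc' (hz.2 hz.1.1)

theorem exists_big (hs : s ≤ 1) (hX : ¬ Delta2 X) (hr : ∃ᶠ z in atTop, Valid r z) (u : ℕ) :
    ∃ c, Big s r c (seg X c) u := by
  obtain ⟨a, hua, ha⟩ : ∃ a, u + 1 ≤ a ∧
      ∀ u' ∈ Finset.range (u + 2), ∃ᶠ z in atTop, NoSafe s r z a (seg X a) u' :=
    ((eventually_ge_atTop (u + 1)).and ((eventually_all_finset _).2 fun u' _ =>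
      eventually_frequently_noSafe hs hX hr u')).exists
  let I := Finset.range (a + 1) ×ˢ Finset.range (2 ^ a)
  obtain ⟨c, hac, hc⟩ : ∃ c, a ≤ c ∧ ∀ p ∈ I,
      (∃ᶠ z in atTop, AllHit s r z c (seg X c) a p.2 u p.1) ∨
        ∀ z, NoSafe (1 - s) r z a p.2 p.1 → z ≤ c := by
    refine ((eventually_ge_atTop a).and ((eventually_all_finset _).2 fun p _ => ?_)).exists
    by_cases h : ∃ᶠ z in atTop, NoSafe (1 - s) r z a p.2 p.1
    · filter_upwards [eventually_frequently_allHit hs hX u h] with c hc using Or.inl hc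
    · obtain ⟨c₀, h⟩ := eventually_atTop.1 (not_frequently.1 h)
      filter_upwards [eventually_ge_atTop c₀] with c hc
      refine Or.inr fun z hz => ?_
      by_contra! hlt
      exact h z (hc.trans hlt.le) hz
  refine ⟨c, fun m => ?_⟩
  have hex : ∀ {P : ℕ → Prop}, (∃ᶠ z in atTop, P z) → ∀ᶠ t in atTop, ∃ z < t, m ≤ z ∧ P z := by
    intro P hP
    obtain ⟨z, hz, hPz⟩ := frequently_atTop.1 hP m
    filter_upwards [eventually_gt_atTop z] with t ht using ⟨z, ht, hz, hPz⟩
  have h1 : ∀ᶠ t in atTop, ∀ u' ∈ Finset.range (u + 2),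
      ∃ z < t, m ≤ z ∧ NoSafe s r z a (seg X a) u' :=
    (eventually_all_finset _).2 fun u' hu' => hex (ha u' hu')
  have h2 : ∀ᶠ t in atTop, ∀ p ∈ I,
      (∃ z < t, m ≤ z ∧ AllHit s r z c (seg X c) a p.2 u p.1) ∨
        ∀ z, NoSafe (1 - s) r z a p.2 p.1 → z ≤ c := by
    refine (eventually_all_finset _).2 fun p hp => ?_
    rcases hc p hp with h | h
    · filter_upwards [hex h] with t ht using Or.inl ht
    · exact Eventually.of_forall fun _ => Or.inr h
  obtain ⟨t, ht1, ht2⟩ := (h1.and h2).exists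
  refine ⟨t, a, hac, hua, fun u' hu' => ?_, fun v hv τ hτ => ?_⟩
  · rw [seg_mod X hac]
    exact ht1 u' (Finset.mem_range.2 (by omega))
  · rcases ht2 (v, τ) (Finset.mem_product.2
      ⟨Finset.mem_range.2 (by omega), Finset.mem_range.2 hτ⟩) with h | h
    · exact Or.inr h
    · exact Or.inl fun z _ => h z

end Infinite

theorem BgAt.anti {m m' t c σ a : ℕ} (h : BgAt s r m t c σ u a) (hm : m' ≤ m) :
    BgAt s r m' t c σ u a := by
  obtain ⟨hua, h1, h2⟩ := h
  refine ⟨hua, fun u' hu' => ?_, fun v hv τ hτ => ?_⟩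
  · obtain ⟨z, hz, hmz, h⟩ := h1 u' hu'
    exact ⟨z, hz, hm.trans hmz, h⟩
  · refine (h2 v hv τ hτ).imp_right ?_
    rintro ⟨z, hz, hmz, h⟩
    exact ⟨z, hz, hm.trans hmz, h⟩

theorem Bg.anti {m m' t c σ : ℕ} (h : Bg s r m t c σ u) (hm : m' ≤ m) : Bg s r m' t c σ u := by
  obtain ⟨a, hac, h⟩ := h
  exact ⟨a, hac, h.anti hm⟩

theorem BgAt.lt {m t c σ a : ℕ} (h : BgAt s r m t c σ u a) : m < t := by
  obtain ⟨z, hz, hmz, -⟩ := h.2.1 0 (Nat.zero_le _)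
  omega

theorem Bg.lt {m t c σ : ℕ} (h : Bg s r m t c σ u) : m < t := by
  obtain ⟨a, -, h⟩ := h
  exact h.lt

theorem Big.frequently_fresh {c σ : ℕ} (h : Big s r c σ u) :
    ∃ᶠ t in atTop, Fresh s r c σ u t := by
  classical
  refine frequently_atTop.2 fun N => ⟨Nat.find (h N), ?_, N, ?_, Nat.find_spec (h N), fun t' ht' =>
    Nat.find_min (h N) ht'⟩
  · exact (Nat.find_spec (h N)).lt.le
  · exact (Nat.find_spec (h N)).lt

theorem eventually_not_fresh {c σ : ℕ} (h : ¬ Big s r c σ u) :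
    ∀ᶠ t in atTop, ¬ Fresh s r c σ u t := by
  unfold Big at h
  push Not at h
  obtain ⟨m₀, hm₀⟩ := h
  have h1 : ∀ᶠ t in atTop, ∀ m ∈ Finset.range m₀,
      ¬ (Bg s r m t c σ u ∧ ∀ t' < t, ¬ Bg s r m t' c σ u) :=
    (eventually_all_finset _).2 fun m _ => eventually_of_subsingleton fun a b hab ha hb =>
      hb.2 a hab ha.1
  filter_upwards [h1] with t ht
  rintro ⟨m, -, h2, h3⟩
  by_cases hm : m < m₀
  · exact ht m (Finset.mem_range.2 hm) ⟨h2, h3⟩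
  · exact hm₀ t (h2.anti (not_lt.1 hm))

theorem eventually_not_ev {c σ τ : ℕ} (h : ∀ c' < c, ¬ Big s r c' (σ % 2 ^ c') u)
    (h' : ∀ c' < c, ¬ Big (1 - s) r c' (τ % 2 ^ c') v) :
    ∀ᶠ t in atTop, ¬ Ev s r c σ u τ v t := by
  have h1 : ∀ᶠ t in atTop, ∀ c' ∈ Finset.range c,
      ¬ Fresh s r c' (σ % 2 ^ c') u t ∧ ¬ Fresh (1 - s) r c' (τ % 2 ^ c') v t :=
    (eventually_all_finset _).2 fun c' hc' =>
      (eventually_not_fresh (h c' (Finset.mem_range.1 hc'))).and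
        (eventually_not_fresh (h' c' (Finset.mem_range.1 hc')))
  filter_upwards [h1] with t ht
  rintro ⟨c', hc', h2⟩
  have := ht c' (Finset.mem_range.2 hc')
  tauto

theorem Ev.swap (hs : s ≤ 1) {c σ τ t : ℕ} (h : Ev s r c σ u τ v t) :
    Ev (1 - s) r c τ v σ u t := by
  obtain ⟨c', hc', h⟩ := h
  refine ⟨c', hc', ?_⟩
  rw [show 1 - (1 - s) = s by omega]
  exact h.symm

theorem NotKept.mono {c σ τ z S S' : ℕ} (h : NotKept s r c σ u τ v z S) (hS : S ≤ S') :
    NotKept s r c σ u τ v z S' := by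
  refine h.imp_right (Or.imp_left ?_)
  rintro ⟨t, ht, h⟩
  exact ⟨t, ht.trans_le hS, h⟩

theorem kept_iff {c σ τ z : ℕ} : Kept s r c σ u τ v z ↔
    AllHit s r z c σ c τ u v ∧ (∀ t ≥ z, ¬ Ev s r c σ u τ v t) ∧
      ∀ z' < z, AllHit s r z' c σ c τ u v → ∃ t < z, z' ≤ t ∧ Ev s r c σ u τ v t := by
  unfold Kept NotKept
  constructor
  · intro h
    refine ⟨?_, fun t ht he => h (t + 1) (Or.inr (Or.inl ⟨t, Nat.lt_succ_self t, ht, he⟩)),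
      fun z' hz' hz => ?_⟩
    · by_contra hc
      exact h 0 (Or.inl hc)
    · by_contra! hc
      exact h 0 (Or.inr (Or.inr ⟨z', hz', hz, hc⟩))
  · rintro ⟨h1, h2, h3⟩ S (h | ⟨t, -, ht, he⟩ | ⟨z', hz', hz, h⟩)
    · exact h h1
    · exact h2 t ht he
    · obtain ⟨t, ht, hzt, he⟩ := h3 z' hz' hz
      exact h t ht hzt he

theorem Kept.swap (hs : s ≤ 1) {c σ τ z : ℕ} (h : Kept s r c σ u τ v z) :
    Kept (1 - s) r c τ v σ u z := by
  have h11 : 1 - (1 - s) = s := by omega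
  rw [kept_iff] at h ⊢
  obtain ⟨h1, h2, h3⟩ := h
  refine ⟨h1.swap hs, fun t ht he => h2 t ht ?_, fun z' hz' hz => ?_⟩
  · simpa only [h11] using he.swap (Nat.sub_le 1 s)
  · obtain ⟨t, ht, hzt, he⟩ := h3 z' hz' (by simpa only [h11] using hz.swap (Nat.sub_le 1 s))
    exact ⟨t, ht, hzt, he.swap hs⟩

theorem eventually_not_kept (c σ τ : ℕ) : ∀ᶠ z in atTop, ¬ Kept s r c σ u τ v z := by
  refine eventually_of_subsingleton fun a b hab ha hb => ?_
  rw [kept_iff] at ha hb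
  obtain ⟨t, -, hat, he⟩ := hb.2.2 a hab ha.1
  exact ha.2.1 t hat he

theorem exists_kept {c σ τ : ℕ} (h : ∃ᶠ z in atTop, AllHit s r z c σ c τ u v)
    (h' : ∀ᶠ t in atTop, ¬ Ev s r c σ u τ v t) : ∃ z, Kept s r c σ u τ v z := by
  classical
  have hex : ∃ z, AllHit s r z c σ c τ u v ∧ ∀ t ≥ z, ¬ Ev s r c σ u τ v t := by
    obtain ⟨m, hm⟩ := eventually_atTop.1 h'
    obtain ⟨z, hz, h⟩ := frequently_atTop.1 h m
    exact ⟨z, h, fun t ht => hm t (hz.trans ht)⟩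
  refine ⟨Nat.find hex, kept_iff.2
    ⟨(Nat.find_spec hex).1, (Nat.find_spec hex).2, fun z' hz' hz => ?_⟩⟩
  have := Nat.find_min hex hz'
  push Not at this
  obtain ⟨t, ht, he⟩ := this hz
  refine ⟨t, ?_, ht, he⟩
  by_contra! hlt
  exact (Nat.find_spec hex).2 t hlt he

theorem eventually_active_valid (r : ℕ) :
    ∀ᶠ k in atTop, Active r k → ∃ ρ, Valid r (Nat.pair k ρ) := by
  classical
  by_cases h : ∀ k ≥ r.unpair.2, ∃ t, Resp r k t
  · refine Eventually.of_forall fun k hk => ⟨Nat.find (h k hk.2.1), ?_⟩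
    unfold Valid
    rw [Nat.unpair_pair]
    exact ⟨hk, Nat.find_spec (h k hk.2.1), fun t ht => Nat.find_min (h k hk.2.1) ht⟩
  · push Not at h
    obtain ⟨k', hk', h⟩ := h
    have h1 : ∀ᶠ k in atTop, ∀ m ∈ Finset.range (k' + 1),
        ¬ (RespBelow r m k ∧ ∀ t < k, ¬ RespBelow r m t) :=
      (eventually_all_finset _).2 fun m _ => eventually_of_subsingleton fun a b hab ha hb =>
        hb.2 a hab ha.1
    filter_upwards [h1] with k hk
    rintro ⟨-, -, m, -, h2, h3⟩
    refine absurd ⟨h2, h3⟩ (hk m (Finset.mem_range.2 ?_))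
    by_contra! hlt
    exact h k (h2 k' (by omega) hk')

theorem eventually_released {X : Set ℕ} (hs : s ≤ 1) (hX : ¬ Delta2 X) (r u : ℕ) :
    ∀ᶠ k in atTop, Active r k → ∃ S, Released s r u k (seg X (lev k)) S := by
  by_cases hr : ∃ᶠ z in atTop, Valid r z
  · obtain ⟨c₀, hc₀⟩ := exists_big hs hX hr u
    let I := Finset.range (c₀ + 1) ×ˢ Finset.range (c₀ + 1) ×ˢ Finset.range (2 ^ c₀)
    have h1 : ∀ᶠ z in atTop, ∀ p ∈ I, ¬ Kept s r p.1 (seg X p.1) u p.2.2 p.2.1 z :=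
      (eventually_all_finset _).2 fun p _ => eventually_not_kept _ _ _
    obtain ⟨m, hm⟩ := eventually_atTop.1 h1
    filter_upwards [eventually_active_valid r, eventually_ge_atTop m] with k hk hmk hact
    obtain ⟨ρ, hρ⟩ := hk hact
    have h2 : ∀ p ∈ Finset.range (lev k + 1) ×ˢ Finset.range (lev k + 1) ×ˢ
        Finset.range (2 ^ lev k), ∀ᶠ S in atTop, p.2.1 ≤ p.1 → p.2.2 < 2 ^ p.1 →
          NotKept s r p.1 (seg X p.1) u p.2.2 p.2.1 (Nat.pair k ρ) S := by
      rintro ⟨c, v, τ⟩ -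
      by_cases hS : ∃ S, NotKept s r c (seg X c) u τ v (Nat.pair k ρ) S
      · obtain ⟨S, hS⟩ := hS
        filter_upwards [eventually_ge_atTop S] with S' hS' _ _ using hS.mono hS'
      · have hK : Kept s r c (seg X c) u τ v (Nat.pair k ρ) := not_exists.1 hS
        refine Eventually.of_forall fun S hv hτ => ?_
        by_cases hcc : c ≤ c₀
        · refine absurd hK (hm _ (hmk.trans (Nat.left_le_pair k ρ)) (c, v, τ) ?_)
          simp only at hv hτ
          refine Finset.mem_product.2 ⟨Finset.mem_range.2 (by simpa using hcc), Finset.mem_product.2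
            ⟨Finset.mem_range.2 (by simp; omega), Finset.mem_range.2 ?_⟩⟩
          exact hτ.trans_le (Nat.pow_le_pow_right two_pos hcc)
        · obtain ⟨t, ht, hf⟩ := frequently_atTop.1 hc₀.frequently_fresh (Nat.pair k ρ)
          refine absurd ?_ ((kept_iff.1 hK).2.1 t ht)
          refine ⟨c₀, by omega, Or.inl ?_⟩
          rwa [seg_mod X (by omega)]
    obtain ⟨S, hS, hρS⟩ := (((eventually_all_finset _).2 h2).and (eventually_gt_atTop ρ)).exists
    refine ⟨S, ρ, hρS, hρ, fun c hc _ v hv τ hτ => ?_⟩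
    rw [seg_mod X hc]
    refine hS (c, v, τ) (Finset.mem_product.2 ⟨Finset.mem_range.2 (by simp; omega),
      Finset.mem_product.2 ⟨Finset.mem_range.2 (by simp; omega), Finset.mem_range.2 ?_⟩⟩) hv hτ
    exact hτ.trans_le (Nat.pow_le_pow_right two_pos hc)
  · obtain ⟨m, hm⟩ := eventually_atTop.1 (not_frequently.1 hr)
    filter_upwards [eventually_active_valid r, eventually_ge_atTop m] with k hk hmk hact
    obtain ⟨ρ, hρ⟩ := hk hact
    exact absurd hρ (hm _ (hmk.trans (Nat.left_le_pair k ρ)))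

end MinimalPair

namespace MinimalPair

open Nat.Partrec (Code)

/-! ### Density -/

theorem cnt_mono {n m : ℕ} {p q : ℕ → Prop} (hnm : n ≤ m) (h : ∀ x < n, p x → q x) :
    cnt n p ≤ cnt m q := by
  classical
  rw [cnt_eq_card, cnt_eq_card]
  refine Finset.card_le_card fun x hx => ?_
  obtain ⟨h1, h2⟩ := Finset.mem_filter.1 hx
  have h3 := Finset.mem_range.1 h1
  exact Finset.mem_filter.2 ⟨Finset.mem_range.2 (h3.trans_le hnm), h x h3 h2⟩

theorem cnt_add (n m : ℕ) (p : ℕ → Prop) : cnt (n + m) p = cnt n p + cnt m fun x => p (n + x) := by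
  classical
  induction m with
  | zero => simp [cnt_zero]
  | succ m ih => rw [← add_assoc, cnt_succ, ih, cnt_succ, add_assoc]

theorem cnt_le (n : ℕ) (p : ℕ → Prop) : cnt n p ≤ n := by
  classical
  rw [cnt_eq_card]
  exact (Finset.card_filter_le _ _).trans (Finset.card_range n).le

theorem cnt_add_cnt_not (n : ℕ) (p : ℕ → Prop) : cnt n p + cnt n (fun x => ¬ p x) = n := by
  classical
  rw [cnt_eq_card, cnt_eq_card, Finset.card_filter_add_card_filter_not, Finset.card_range]

theorem partialDensity_eq (D : Set ℕ) {n : ℕ} (hn : 0 < n) :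
    partialDensity D n = 1 - (cnt n (· ∉ D) : ℝ) / n := by
  classical
  have h1 : (D ∩ Set.Iio n).ncard = cnt n (· ∈ D) := by
    rw [cnt_eq_card, ← Set.ncard_coe_finset]
    congr 1
    ext x
    simp [and_comm]
  have h2 : (cnt n (· ∈ D) : ℝ) + cnt n (· ∉ D) = n := by
    exact_mod_cast cnt_add_cnt_not n (· ∈ D)
  have h3 : (n : ℝ) ≠ 0 := by positivity
  rw [partialDensity, h1, ← h2, eq_sub_iff_add_eq, ← add_div, h2, div_self h3]

theorem density1_iff (D : Set ℕ) :
    Density1 D ↔ ∀ N, ∀ᶠ n in atTop, cnt n (· ∉ D) * 2 ^ N ≤ n := by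
  unfold Density1 HasDensity
  rw [Metric.tendsto_atTop]
  have hd : ∀ n > 0, dist (partialDensity D n) 1 = (cnt n (· ∉ D) : ℝ) / n := by
    intro n hn
    rw [partialDensity_eq D hn, Real.dist_eq, sub_sub_cancel_left, abs_neg,
      abs_of_nonneg (by positivity)]
  constructor
  · intro h N
    obtain ⟨M, hM⟩ := h (1 / 2 ^ N) (by positivity)
    filter_upwards [eventually_ge_atTop M, eventually_gt_atTop 0] with n hn h0
    have h1 := hM n hn
    rw [hd n h0, div_lt_div_iff₀ (by positivity) (by positivity), one_mul] at h1
    exact_mod_cast h1.le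
  · intro h ε hε
    obtain ⟨N, hN⟩ := exists_pow_lt_of_lt_one hε (show (1 / 2 : ℝ) < 1 by norm_num)
    obtain ⟨M, hM⟩ := eventually_atTop.1 ((h N).and (eventually_gt_atTop 0))
    refine ⟨M, fun n hn => ?_⟩
    obtain ⟨h1, h0⟩ := hM n hn
    rw [hd n h0]
    refine lt_of_le_of_lt ?_ hN
    rw [one_div_pow, div_le_div_iff₀ (by positivity) (by positivity), one_mul]
    exact_mod_cast h1

/-- The number of elements of block `k` missing from `D`. -/
noncomputable def miss (k : ℕ) (D : Set ℕ) : ℕ := cnt (2 ^ k) fun x => 2 ^ k + x ∉ D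

theorem miss_eventually_le {D : Set ℕ} (h : Density1 D) (N : ℕ) :
    ∀ᶠ k in atTop, miss k D * 2 ^ N ≤ 2 ^ k := by
  have h1 := (tendsto_pow_atTop_atTop_of_one_lt (one_lt_two : 1 < 2)).comp (tendsto_add_atTop_nat 1)
  filter_upwards [h1.eventually ((density1_iff D).1 h (N + 1))] with k hk
  simp only [Function.comp] at hk
  have h2 : miss k D ≤ cnt (2 ^ (k + 1)) (· ∉ D) := by
    rw [pow_succ, mul_two, cnt_add]
    exact Nat.le_add_left _ _
  rw [pow_succ, pow_succ] at hk
  have h3 := Nat.mul_le_mul_right (2 ^ N) h2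
  rw [pow_succ] at h3
  linarith

theorem density1_of_miss {D : Set ℕ} (h : ∀ N, ∀ᶠ k in atTop, miss k D * 2 ^ N ≤ 2 ^ k) :
    Density1 D := by
  rw [density1_iff]
  intro N
  obtain ⟨K, hK⟩ := eventually_atTop.1 (h (N + 2))
  have h1 : ∀ k ≥ K, cnt (2 ^ k) (· ∉ D) * 2 ^ (N + 2) ≤ 2 ^ (K + (N + 2)) + 2 ^ k := by
    intro k hk
    induction k, hk using Nat.le_induction with
    | base =>
      rw [pow_add 2 K]
      exact (Nat.mul_le_mul_right _ (cnt_le _ _)).trans (Nat.le_add_right _ _)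
    | succ k hk ih =>
      have h2 : cnt (2 ^ (k + 1)) (· ∉ D) = cnt (2 ^ k) (· ∉ D) + miss k D := by
        rw [pow_succ, mul_two, cnt_add]
        rfl
      have h3 := hK k hk
      rw [h2, add_mul, pow_succ 2 k]
      omega
  filter_upwards [eventually_ge_atTop (2 ^ (K + (N + 2)))] with n hn
  have h0 : n ≠ 0 := by
    have : 0 < 2 ^ (K + (N + 2)) := by positivity
    omega
  have h2 : K ≤ Nat.log 2 n + 1 := by
    have := Nat.le_log_of_pow_le one_lt_two hn
    omega
  have h3 := h1 _ h2
  have h4 : n ≤ 2 ^ (Nat.log 2 n + 1) := (Nat.lt_pow_succ_log_self one_lt_two n).le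
  have h5 := Nat.pow_log_le_self 2 h0
  have h6 := Nat.mul_le_mul_right (2 ^ (N + 2)) (cnt_mono (q := (· ∉ D)) h4 fun x _ h => h)
  have h7 : 2 ^ (Nat.log 2 n + 1) = 2 ^ Nat.log 2 n * 2 := pow_succ _ _
  have h8 : cnt n (· ∉ D) * 2 ^ (N + 2) = cnt n (· ∉ D) * 2 ^ N * 4 := by
    rw [pow_add, ← mul_assoc]; norm_num
  omega

/-- The block containing `y`. -/
def blk (y : ℕ) : ℕ := Nat.findGreatest (fun k => 2 ^ k ≤ y) y

theorem blk_add {k x : ℕ} (hx : x < 2 ^ k) : blk (2 ^ k + x) = k := by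
  refine Nat.findGreatest_eq_iff.2 ⟨?_, fun _ => Nat.le_add_right _ _, fun n hn _ h => ?_⟩
  · exact (Nat.lt_two_pow_self).le.trans (Nat.le_add_right _ _)
  · have := Nat.pow_le_pow_right two_pos (Nat.succ_le_of_lt hn)
    rw [Nat.succ_eq_add_one, pow_succ] at this
    omega

theorem blk_primrec : Primrec blk := by
  unfold blk
  exact Primrec.nat_findGreatest Primrec.id (PrimrecPred.le (Primrec.pow (.const 2) .snd) .fst)

/-- The set enumerated from the oracle `X` on side `s`. -/
def Enumerated (s : ℕ) (X : Set ℕ) : Set ℕ :=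
  {y | ∃ S, Put s (blk y) (y - 2 ^ blk y) (seg X (lev (blk y))) S}

theorem mem_enumerated {s k x : ℕ} {X : Set ℕ} (hx : x < 2 ^ k) :
    2 ^ k + x ∈ Enumerated s X ↔ ∃ S, Put s k x (seg X (lev k)) S := by
  simp [Enumerated, blk_add hx]

theorem exists_recIn_enumerated (s : ℕ) (X : Set ℕ) :
    ∃ φ : ℕ →. ℕ, RecIn (chi X) φ ∧ {y | (φ y).Dom} = Enumerated s X ∧ ∀ y v, v ∈ φ y → v = 1 := by
  have hb : ∀ {f : ℕ × ℕ × ℕ → ℕ}, Primrec f → Primrec fun a => blk (f a) :=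
    fun hf => blk_primrec.comp hf
  obtain ⟨φ, h1, h2, h3⟩ := recIn_search X (f := fun y => lev (blk y)) (lev_primrec blk_primrec)
    (P := fun y σ S => Put s (blk y) (y - 2 ^ blk y) σ S)
    (put_primrec (.const s) (hb .fst) (.sub .fst (.pow (.const 2) (hb .fst))) (.proj_fst .snd)
      (.proj_snd .snd))
  exact ⟨φ, h1, Set.ext h2, h3⟩

theorem Released.mono {s r u k σ S S' : ℕ} (h : Released s r u k σ S) (hS : S ≤ S') :
    Released s r u k σ S' := by
  obtain ⟨ρ, hρ, hv, h⟩ := h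
  exact ⟨ρ, hρ.trans_le hS, hv, fun c hc hu v hv τ hτ => (h c hc hu v hv τ hτ).mono hS⟩

theorem cnt_omit {s u k σ : ℕ} (hk : 4 ≤ k) (hs : s ≤ 1) (hσ : σ < 2 ^ lev k) (hu : u ≤ lev k) :
    cnt (2 ^ k) (fun x => Omit s u k x σ) * 2 ^ (u + 1) = 2 ^ k := by
  classical
  have h := card_zeroSet_mul (bits_lt hk hs hσ hu)
  rw [card_bits hs hu] at h
  refine Eq.trans ?_ h
  rw [cnt_eq_card]
  congr 2
  ext x
  rw [mem_zeroSet_bits, Finset.mem_filter, Finset.mem_range]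

theorem density1_enumerated {s : ℕ} {X : Set ℕ} (hs : s ≤ 1) (hX : ¬ Delta2 X) :
    Density1 (Enumerated s X) := by
  refine density1_of_miss fun N => ?_
  have h1 : ∀ᶠ k in atTop, ∀ p ∈ Finset.range N ×ˢ Finset.range N,
      Active p.1 k → ∃ S, Released s p.1 p.2 k (seg X (lev k)) S :=
    (eventually_all_finset _).2 fun p _ => eventually_released hs hX p.1 p.2
  filter_upwards [h1, eventually_ge_atTop (4 ^ (N + 1)), eventually_ge_atTop 4] with k hk hNk h4
  have h2 : ∀ x < 2 ^ k, 2 ^ k + x ∉ Enumerated s X → Omit s N k x (seg X (lev k)) := by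
    intro x hx hxs
    rw [mem_enumerated hx] at hxs
    by_contra ho
    have h3 : ∀ᶠ S in atTop, ∀ p ∈ Finset.range N ×ˢ Finset.range N,
        Active p.1 k → Released s p.1 p.2 k (seg X (lev k)) S := by
      refine (eventually_all_finset _).2 fun p hp => ?_
      by_cases ha : Active p.1 k
      · obtain ⟨S, hS⟩ := hk p hp ha
        filter_upwards [eventually_ge_atTop S] with S' hS' _ using hS.mono hS'
      · exact Eventually.of_forall fun _ h => absurd h ha
    obtain ⟨S, hS⟩ := h3.exists
    refine hxs ⟨S, fun u hu hou r hr ha => ?_⟩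
    have huN : u < N := by
      by_contra! hlt
      exact ho fun i hi => hou i (hi.trans hlt)
    exact hS (r, u) (Finset.mem_product.2
      ⟨Finset.mem_range.2 (hr.trans_lt huN), Finset.mem_range.2 huN⟩) ha
  have h3 := cnt_omit h4 hs (seg_lt X (lev k)) (le_lev hNk)
  have h4 : miss k (Enumerated s X) ≤ _ := cnt_mono le_rfl h2
  calc miss k (Enumerated s X) * 2 ^ N ≤ _ * 2 ^ (N + 1) :=
        Nat.mul_le_mul h4 (Nat.pow_le_pow_right two_pos (Nat.le_succ N))
    _ = 2 ^ k := h3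

theorem density1_mono {D D' : Set ℕ} (h : Density1 D) (hs : D ⊆ D') : Density1 D' := by
  refine (density1_iff D').2 fun N => ?_
  filter_upwards [(density1_iff D).1 h N] with n hn
  exact (Nat.mul_le_mul_right _ (cnt_mono le_rfl fun x _ hx hx' => hx (hs hx'))).trans hn

theorem density1_inter {D D' : Set ℕ} (h : Density1 D) (h' : Density1 D') :
    Density1 (D ∩ D') := by
  classical
  refine (density1_iff _).2 fun N => ?_
  filter_upwards [(density1_iff D).1 h (N + 1), (density1_iff D').1 h' (N + 1)] with n h1 h2
  have h3 : cnt n (· ∉ D ∩ D') ≤ cnt n (· ∉ D) + cnt n (· ∉ D') := by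
    simp only [cnt_eq_card]
    refine le_trans (Finset.card_le_card fun x hx => ?_) (Finset.card_union_le _ _)
    simp only [Finset.mem_filter, Finset.mem_union, Set.mem_inter_iff] at hx ⊢
    tauto
  have h4 := Nat.mul_le_mul_right (2 ^ N) h3
  rw [pow_succ] at h1 h2
  rw [add_mul] at h4
  linarith

/-! ### Opponents -/

theorem Enum.mono {r t t' y : ℕ} (h : Enum r t y) (ht : t ≤ t') : Enum r t' y :=
  Code.evaln_mono ht h

theorem exists_resp {r k : ℕ} {W : Set ℕ} (hW : ∀ y ∈ W, ∃ t, Enum r t y)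
    (hk : miss k W * 2 ≤ 2 ^ k) : ∃ t, Resp r k t := by
  classical
  have h1 : ∀ᶠ t in atTop, ∀ x ∈ Finset.range (2 ^ k), 2 ^ k + x ∈ W → Enum r t (2 ^ k + x) := by
    refine (eventually_all_finset _).2 fun x _ => ?_
    by_cases hx : 2 ^ k + x ∈ W
    · obtain ⟨t, ht⟩ := hW _ hx
      filter_upwards [eventually_ge_atTop t] with t' ht' _ using ht.mono ht'
    · exact Eventually.of_forall fun _ h => absurd h hx
  obtain ⟨t, ht⟩ := h1.exists
  refine ⟨t, ?_⟩
  have h2 := cnt_add_cnt_not (2 ^ k) fun x => 2 ^ k + x ∈ W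
  have h3 : cnt (2 ^ k) (fun x => 2 ^ k + x ∈ W) ≤ cnt (2 ^ k) fun x => Enum r t (2 ^ k + x) :=
    cnt_mono le_rfl fun x hx hW => ht x (Finset.mem_range.2 hx) hW
  unfold Resp
  unfold miss at hk
  omega

theorem Resp.lt {r k t : ℕ} (h : Resp r k t) : k < t := by
  classical
  unfold Resp at h
  have h0 : 0 < cnt (2 ^ k) fun x => Enum r t (2 ^ k + x) := by
    have : 0 < 2 ^ k := by positivity
    omega
  rw [cnt_eq_card, Finset.card_pos] at h0
  obtain ⟨x, hx⟩ := h0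
  have h1 := Code.evaln_bound (Finset.mem_filter.1 hx).2
  have h2 : k < 2 ^ k := Nat.lt_two_pow_self
  omega

theorem Resp.mono {r k t t' : ℕ} (h : Resp r k t) (ht : t ≤ t') : Resp r k t' := by
  refine le_trans h (Nat.mul_le_mul_left 2 (cnt_mono le_rfl fun x _ hx => Enum.mono hx ht))

theorem frequently_valid {r : ℕ} (h : ∀ k ≥ r.unpair.2, ∃ t, Resp r k t) :
    ∃ᶠ z in atTop, Valid r z := by
  classical
  refine frequently_atTop.2 fun N => ?_
  set m := N + r.unpair.2 + 4 with hm
  have h1 : ∃ t, RespBelow r m t := by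
    have h2 : ∀ᶠ t in atTop, ∀ k ∈ Finset.range m, r.unpair.2 ≤ k → Resp r k t := by
      refine (eventually_all_finset _).2 fun k _ => ?_
      by_cases hk : r.unpair.2 ≤ k
      · obtain ⟨t, ht⟩ := h k hk
        filter_upwards [eventually_ge_atTop t] with t' ht' _ using ht.mono ht'
      · exact Eventually.of_forall fun _ h => absurd h hk
    obtain ⟨t, ht⟩ := h2.exists
    exact ⟨t, fun k hk => ht k (Finset.mem_range.2 hk)⟩
  set k := Nat.find h1
  have hmk : m ≤ k := by
    have := (Nat.find_spec h1 (m - 1) (by omega) (by omega)).lt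
    omega
  have hk : Active r k :=
    ⟨by omega, by omega, m, hmk, Nat.find_spec h1, fun t ht => Nat.find_min h1 ht⟩
  have h3 := h k hk.2.1
  refine ⟨Nat.pair k (Nat.find h3), ?_, ?_⟩
  · exact le_trans (by omega) (Nat.left_le_pair k _)
  · unfold Valid
    rw [Nat.unpair_pair]
    exact ⟨hk, Nat.find_spec h3, fun t ht => Nat.find_min h3 ht⟩

end MinimalPair

namespace MinimalPair

open Nat.Partrec (Code)

theorem exists_interleaving (n : ℕ) {f g : ℕ → ℕ} (hf : Monotone f) (hg : Monotone g)
    (hf' : ∀ m, m ≤ f m) (hg' : ∀ m, m ≤ g m) :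
    ∃ u ≥ n, ∃ v ≥ n, g v ≤ f (u + 1) ∧ f u ≤ g (v + 1) := by
  classical
  have h1 : ∃ v, f n ≤ g (n + v + 1) := ⟨f n, le_trans (by omega) (hg' _)⟩
  have h2 : ∃ u, g n ≤ f (n + u + 1) := ⟨g n, le_trans (by omega) (hf' _)⟩
  rcases Nat.eq_zero_or_pos (Nat.find h1) with h0 | h0
  · have h3 := Nat.find_spec h1
    rw [h0] at h3
    rcases Nat.eq_zero_or_pos (Nat.find h2) with h0' | h0'
    · have h4 := Nat.find_spec h2
      rw [h0'] at h4
      exact ⟨n, le_rfl, n, le_rfl, h4, h3⟩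
    · have h4 := not_le.1 (Nat.find_min h2 (Nat.sub_lt h0' one_pos))
      rw [show n + (Nat.find h2 - 1) + 1 = n + Nat.find h2 by omega] at h4
      exact ⟨n + Nat.find h2, Nat.le_add_right _ _, n, le_rfl, Nat.find_spec h2,
        h4.le.trans (hg (Nat.le_succ n))⟩
  · have h4 := not_le.1 (Nat.find_min h1 (Nat.sub_lt h0 one_pos))
    rw [show n + (Nat.find h1 - 1) + 1 = n + Nat.find h1 by omega] at h4
    exact ⟨n, le_rfl, n + Nat.find h1, Nat.le_add_right _ _, h4.le.trans (hf (Nat.le_succ n)),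
      Nat.find_spec h1⟩

/-- At length `a`, safety fails infinitely often at all scales up to `u`. -/
def Risky (s r : ℕ) (X : Set ℕ) (u a : ℕ) : Prop :=
  u ≤ a ∧ ∀ u' ≤ u, ∃ᶠ z in atTop, NoSafe s r z a (seg X a) u'

variable {s r u v : ℕ} {X Y : Set ℕ}

theorem exists_risky (hs : s ≤ 1) (hX : ¬ Delta2 X) (hr : ∃ᶠ z in atTop, Valid r z) (u : ℕ) :
    ∃ a, Risky s r X u a := by
  obtain ⟨a, hua, ha⟩ := ((eventually_ge_atTop u).and
    ((eventually_all_finset (Finset.range (u + 1))).2 fun u' _ =>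
      eventually_frequently_noSafe hs hX hr u')).exists
  exact ⟨a, hua, fun u' hu' => ha u' (Finset.mem_range.2 (by omega))⟩

theorem exists_risky_bound (hs : s ≤ 1) (hX : ¬ Delta2 X) (hr : ∃ᶠ z in atTop, Valid r z) :
    ∃ f : ℕ → ℕ, Monotone f ∧ (∀ u, u ≤ f u) ∧ (∀ u, Risky s r X u (f u)) ∧
      ∀ u a, Risky s r X u a → f u ≤ a := by
  classical
  have h := exists_risky hs hX hr
  refine ⟨fun u => Nat.find (h u), monotone_nat_of_le_succ fun u => ?_, fun u => ?_, fun u => ?_,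
    fun u a ha => ?_⟩
  · have h1 := Nat.find_spec (h (u + 1))
    exact Nat.find_min' (h u) ⟨(Nat.le_succ u).trans h1.1, fun u' hu' => h1.2 u' (by omega)⟩
  · exact (Nat.find_spec (h u)).1
  · exact Nat.find_spec (h u)
  · exact Nat.find_min' (h u) ha

theorem Big.exists_bgAt {c σ : ℕ} (h : Big s r c σ u) :
    ∃ a ≤ c, ∀ m, ∃ t, BgAt s r m t c σ u a := by
  by_contra! hcon
  have h1 : ∀ᶠ m in atTop, ∀ a ∈ Finset.range (c + 1), ∀ t, ¬ BgAt s r m t c σ u a := by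
    refine (eventually_all_finset _).2 fun a ha => ?_
    obtain ⟨m, hm⟩ := hcon a (by have := Finset.mem_range.1 ha; omega)
    filter_upwards [eventually_ge_atTop m] with m' hm' t ht using hm t (ht.anti hm')
  obtain ⟨m, hm⟩ := h1.exists
  obtain ⟨t, a, hac, hb⟩ := h m
  exact hm a (Finset.mem_range.2 (by omega)) t hb

theorem Risky.frequently {a b : ℕ} (h : Risky s r X u a) (hab : a ≤ b) :
    ∃ᶠ z in atTop, NoSafe s r z b (seg X b) u :=
  ((h.2 u le_rfl).and_eventually (eventually_le_levz r b)).mono fun _ hz =>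
    hz.1.extend hab (hz.2 hz.1.1)

theorem exists_kept_of_big {b c : ℕ} (hB : Big s r c (seg X c) u)
    (hX : ∀ c' < c, ¬ Big s r c' (seg X c') u) (hY : ∀ c' < c, ¬ Big (1 - s) r c' (seg Y c') v)
    (hb : Risky (1 - s) r Y v b) (hXY : ∀ a, Risky s r X (u + 1) a → b ≤ a) :
    u ≤ c ∧ v ≤ c ∧ ∃ z, Kept s r c (seg X c) u (seg Y c) v z := by
  obtain ⟨a, hac, ha⟩ := hB.exists_bgAt
  have hua : Risky s r X (u + 1) a := by
    refine ⟨(ha 0).choose_spec.1, fun u' hu' => frequently_atTop.2 fun m => ?_⟩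
    obtain ⟨t, ht⟩ := ha m
    obtain ⟨z, -, hmz, hz⟩ := ht.2.1 u' hu'
    rw [seg_mod X hac] at hz
    exact ⟨z, hmz, hz⟩
  have hba := hXY a hua
  have hva := hb.1.trans hba
  refine ⟨(Nat.le_succ u).trans (hua.1.trans hac), hva.trans hac, exists_kept ?_ ?_⟩
  · refine frequently_atTop.2 fun m => ?_
    obtain ⟨z₀, hz₀, hz⟩ := frequently_atTop.1 (hb.frequently hba) (c + 1)
    obtain ⟨t, ht⟩ := ha (max m z₀)
    have hlt := ht.lt
    rcases ht.2.2 v hva (seg Y a) (seg_lt Y a) with h | ⟨z, -, hmz, h⟩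
    · have := h z₀ ((le_max_right _ _).trans_lt hlt) hz
      omega
    · exact ⟨z, (le_max_left _ _).trans hmz, h.extend_right hac⟩
  · refine eventually_not_ev (fun c' hc' => ?_) fun c' hc' => ?_
    · rw [seg_mod X hc'.le]
      exact hX c' hc'
    · rw [seg_mod Y hc'.le]
      exact hY c' hc'

theorem Kept.not_put {c z x : ℕ} {τ : ℕ} (h : Kept s r c (seg X c) u τ v z) (hτ : τ < 2 ^ c)
    (hru : r ≤ u) (hu : u ≤ c) (hv : v ≤ c) (hx : Omit s u z.unpair.1 x (seg X (levz z))) (S : ℕ) :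
    ¬ Put s z.unpair.1 x (seg X (levz z)) S := by
  intro hp
  obtain ⟨hz, hc, -⟩ := (kept_iff.1 h).1
  obtain ⟨ρ, -, hρ, hn⟩ := hp u (hu.trans hc) hx r hru hz.1
  have h1 : Nat.pair z.unpair.1 ρ = z := hρ.eq_of_fst_eq hz (by rw [Nat.unpair_pair])
  have h2 := hn c hc hu v hv τ hτ
  rw [h1, seg_mod X hc] at h2
  exact h S h2

theorem Kept.exists_missed (hs : s ≤ 1) {c z : ℕ} (h : Kept s r c (seg X c) u (seg Y c) v z)
    (hru : r ≤ u) (hrv : r ≤ v) (hu : u ≤ c) (hv : v ≤ c) :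
    ∃ x < 2 ^ z.unpair.1, Got r z x ∧ 2 ^ z.unpair.1 + x ∉ Enumerated s X ∧
      2 ^ z.unpair.1 + x ∉ Enumerated (1 - s) Y := by
  obtain ⟨hz, hc, hh⟩ := (kept_iff.1 h).1
  obtain ⟨x, hx, hg, h1, h2⟩ := hh (seg X (levz z)) (seg_lt X _) (seg_mod X hc) (seg Y (levz z))
    (seg_lt Y _) (seg_mod Y hc)
  refine ⟨x, hx, hg, ?_, ?_⟩
  · rw [mem_enumerated hx]
    rintro ⟨S, hS⟩
    exact h.not_put (seg_lt Y c) hru hu hv h1 S hS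
  · rw [mem_enumerated hx]
    rintro ⟨S, hS⟩
    exact (h.swap hs).not_put (seg_lt X c) hrv hv hu h2 S hS

theorem exists_got_not_enumerated (hX : ¬ Delta2 X) (hY : ¬ Delta2 Y)
    (hr : ∃ᶠ z in atTop, Valid r z) :
    ∃ z x, Got r z x ∧ 2 ^ z.unpair.1 + x ∉ Enumerated 0 X ∪ Enumerated 1 Y := by
  classical
  obtain ⟨f, hf, hf', hfu, hfm⟩ := exists_risky_bound (s := 0) (by simp) hX hr
  obtain ⟨g, hg, hg', hgu, hgm⟩ := exists_risky_bound (s := 1) le_rfl hY hr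
  obtain ⟨u, hu, v, hv, h1, h2⟩ := exists_interleaving r hf hg hf' hg'
  have hBX := exists_big (s := 0) (by simp) hX hr u
  have hBY := exists_big (s := 1) le_rfl hY hr v
  rcases le_total (Nat.find hBX) (Nat.find hBY) with h | h
  · obtain ⟨huc, hvc, z, hz⟩ := exists_kept_of_big (s := 0) (Y := Y) (v := v) (Nat.find_spec hBX)
      (fun c' hc' => Nat.find_min hBX hc') (fun c' hc' => Nat.find_min hBY (hc'.trans_le h))
      (hgu v) fun a ha => h1.trans (hfm _ a ha)
    obtain ⟨x, -, hx, h3, h4⟩ := hz.exists_missed (by simp) hu hv huc hvc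
    exact ⟨z, x, hx, fun h => h.elim h3 h4⟩
  · obtain ⟨hvc, huc, z, hz⟩ := exists_kept_of_big (s := 1) (Y := X) (v := u) (Nat.find_spec hBY)
      (fun c' hc' => Nat.find_min hBY hc') (fun c' hc' => Nat.find_min hBX (hc'.trans_le h))
      (hfu u) fun a ha => h2.trans (hgm _ a ha)
    obtain ⟨x, -, hx, h3, h4⟩ := hz.exists_missed le_rfl hv hu hvc huc
    exact ⟨z, x, hx, fun h => h.elim h4 h3⟩

theorem not_genericallyComputable (hX : ¬ Delta2 X) (hY : ¬ Delta2 Y) :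
    ¬ GenericallyComputable (Enumerated 0 X ∪ Enumerated 1 Y) := by
  rintro ⟨φ, hφ, hd, hval, h1, h0⟩
  obtain ⟨e, rfl⟩ := Code.exists_code.1 hφ
  have hC : Density1 (Enumerated 0 X ∪ Enumerated 1 Y) :=
    density1_mono (density1_enumerated (by simp) hX) Set.subset_union_left
  have hW : Density1 {n | 1 ∈ e.eval n} := by
    refine density1_mono (density1_inter hd hC) ?_
    rintro n ⟨hn, hnC⟩
    obtain ⟨v, hv⟩ := Part.dom_iff_mem.1 hn
    rcases hval n v hv with rfl | rfl
    · exact absurd hnC (h0 n hv)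
    · exact hv
  obtain ⟨n, hn⟩ := eventually_atTop.1 (miss_eventually_le hW 1)
  let r := Nat.pair (Encodable.encode e) n
  have hr1 : Denumerable.ofNat Code r.unpair.1 = e := by
    simp [r]
  have hr2 : r.unpair.2 = n := by simp [r]
  have hr : ∃ᶠ z in atTop, Valid r z := by
    refine frequently_valid fun k hk => exists_resp (W := {n | 1 ∈ e.eval n}) (fun y hy => ?_) ?_
    · obtain ⟨t, ht⟩ := Code.evaln_complete.1 hy
      refine ⟨t, ?_⟩
      unfold Enum
      rw [hr1]
      exact ht
    · simpa using hn k (hr2 ▸ hk)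
  obtain ⟨z, x, hg, hx⟩ := exists_got_not_enumerated hX hY hr
  unfold Got Enum at hg
  rw [hr1] at hg
  exact hx (h1 _ (Code.evaln_sound hg))

theorem genericallyComputes_of_enumerated_subset {C : Set ℕ} (hs : s ≤ 1) (hX : ¬ Delta2 X)
    (hC : Enumerated s X ⊆ C) : GenericallyComputes X C := by
  obtain ⟨φ, hφ, hd, hv⟩ := exists_recIn_enumerated s X
  refine ⟨φ, hφ, hd ▸ density1_enumerated hs hX, fun n v h => Or.inr (hv n v h), fun n h => hC ?_,
    fun n h => absurd (hv n 0 h) zero_ne_one⟩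
  rw [← hd]
  exact Part.dom_iff_mem.2 ⟨1, h⟩

end MinimalPair

/-- If neither `A` nor `B` is `Δ⁰₂`, then `A` and `B` do not form a minimal pair for
generic computability: some `C` is not generically computable but is generically
computable from each of `A` and `B`. -/
theorem no_minimal_pair_of_not_delta2 (A B : Set ℕ)
    (hA : ¬ Delta2 A) (hB : ¬ Delta2 B) :
    ∃ C : Set ℕ, ¬ GenericallyComputable C ∧
      GenericallyComputes A C ∧ GenericallyComputes B C := by
  exact ⟨MinimalPair.Enumerated 0 A ∪ MinimalPair.Enumerated 1 B,
    MinimalPair.not_genericallyComputable hA hB,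
    MinimalPair.genericallyComputes_of_enumerated_subset zero_le_one hA Set.subset_union_left,
    MinimalPair.genericallyComputes_of_enumerated_subset le_rfl hB Set.subset_union_right⟩
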